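/- arXiv:2503.03902 — 13 statements merged into one kernel-verified Lean document; each statement's English description precedes it below -/
import Mathlib

section
/- Let H be a real Hilbert space, A : H → Set H a monotone set-valued operator, D : H → H monotone, and B : H → H monotone. Let z ∈ H with B z = 0, let p ∈ H and a_z ∈ A z satisfy a_z + D z + p = 0, let ε > 0, β > 0, and let x̄ ∈ H satisfy 0 ∈ A x̄ + D x̄ + ε x̄ + β B x̄ (i.e. there is a ∈ A x̄ with a + D x̄ + ε x̄ + β B x̄ = 0). Then ⟪x̄ − z, p⟫ ≥ ε ⟪x̄, x̄ − z⟫ ≥ ε ‖x̄‖ (‖x̄‖ − ‖z‖). -/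
open Filter Topology MeasureTheory
open scoped RealInnerProductSpace

/-- key inequality along the regularized solutions. -/
theorem regularized_solution_inequality
    {H : Type*} [NormedAddCommGroup H] [InnerProductSpace ℝ H]
    (A : H → Set H) (D B : H → H)
    (hAmono : ∀ ⦃x y u v : H⦄, u ∈ A x → v ∈ A y → (0:ℝ) ≤ ⟪u - v, x - y⟫)
    (hDmono : ∀ x y : H, (0:ℝ) ≤ ⟪D x - D y, x - y⟫)
    (hBmono : ∀ x y : H, (0:ℝ) ≤ ⟪B x - B y, x - y⟫)
    (z p az : H) (hBz : B z = 0) (haz : az ∈ A z) (hzsol : az + D z + p = 0)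
    (ε β : ℝ) (hε : 0 < ε) (hβ : 0 < β)
    (xbar a : H) (ha : a ∈ A xbar)
    (hxbar : a + D xbar + ε • xbar + β • B xbar = 0) :
    ε * ⟪xbar, xbar - z⟫ ≤ ⟪xbar - z, p⟫ ∧
    ε * (‖xbar‖ * (‖xbar‖ - ‖z‖)) ≤ ε * ⟪xbar, xbar - z⟫ := by
  have h1 := hAmono ha haz
  have h2 := hDmono xbar z
  have h3 := hBmono xbar z
  rw [hBz, sub_zero] at h3
  have h4 : p = (a - az) + (D xbar - D z) + ε • xbar + β • B xbar := by
    have hp : p = -(az + D z) := (neg_eq_of_add_eq_zero_right hzsol).symm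
    have e : (a - az) + (D xbar - D z) + ε • xbar + β • B xbar
        = (a + D xbar + ε • xbar + β • B xbar) - (az + D z) := by abel
    rw [e, hxbar, hp, zero_sub]
  constructor
  · rw [← real_inner_comm (xbar - z) p, h4]
    simp only [inner_add_left, real_inner_smul_left]
    have h5 := mul_nonneg hβ.le h3
    linarith
  · apply mul_le_mul_of_nonneg_left _ hε.le
    rw [inner_sub_right, real_inner_self_eq_norm_sq]
    nlinarith [real_inner_le_norm xbar z]
end

section
/- Under the standing data, let (ε_n) and (β_n) be sequences in (0,∞) with ε_n → 0, β_n → ∞ and ε_n β_n → ∞, and for each n let x̄_n := x̄(ε_n, β_n) be the unique zero of Φ_{ε_n, β_n}. Then the sequence (x̄_n) is bounded in H and ‖B(x̄_n)‖ → 0 as n → ∞. -/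
open Filter Topology MeasureTheory
open scoped RealInnerProductSpace

variable {H : Type*} [NormedAddCommGroup H] [InnerProductSpace ℝ H] [CompleteSpace H]

/-- A set-valued operator is monotone. -/
def MonoSV (A : H → Set H) : Prop :=
  ∀ ⦃x y u v : H⦄, u ∈ A x → v ∈ A y → (0:ℝ) ≤ ⟪u - v, x - y⟫

/-- A set-valued operator is maximally monotone: it is monotone and its graph is not
properly contained in the graph of any monotone operator. -/
def MaxMonoSV (A : H → Set H) : Prop :=
  MonoSV A ∧ ∀ B : H → Set H, MonoSV B → (∀ x, A x ⊆ B x) → ∀ x, B x ⊆ A x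

/-- The normal cone to `C` at `x` (empty for `x ∉ C`). -/
def nCone (C : Set H) (x : H) : Set H :=
  {ξ : H | x ∈ C ∧ ∀ y ∈ C, ⟪ξ, y - x⟫ ≤ 0}

/-- The set-valued operator `Φ = A + D + N_C`. -/
def PhiOp (A : H → Set H) (D : H → H) (C : Set H) : H → Set H :=
  fun x => {w : H | ∃ a ∈ A x, ∃ ξ ∈ nCone C x, w = a + D x + ξ}

theorem central_path_bounded_and_B_to_zero
    (A : H → Set H) (D B : H → H) (η μ : ℝ) (hη : 0 < η) (hμ : 0 < μ)
    (hAmax : MaxMonoSV A)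
    (hDmono : ∀ x y : H, (0:ℝ) ≤ ⟪D x - D y, x - y⟫)
    (hDlip : ∀ x y : H, ‖D x - D y‖ ≤ (1/η) * ‖x - y‖)
    (hBcoco : ∀ x y : H, μ * ‖B x - B y‖^2 ≤ ⟪B x - B y, x - y⟫)
    (hBcoer : ∀ M : ℝ, ∃ R : ℝ, ∀ x : H, R ≤ ‖x‖ → M ≤ ⟪x, B x⟫ / ‖x‖)
    (hCne : {x : H | B x = 0}.Nonempty)
    (hANCmax : MaxMonoSV (fun x : H =>
      {w : H | ∃ a ∈ A x, ∃ ξ ∈ nCone {z : H | B z = 0} x, w = a + ξ}))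
    (hADBmax : ∀ β : ℝ, 0 < β →
      MaxMonoSV (fun x : H => {w : H | ∃ a ∈ A x, w = a + D x + β • B x}))
    (hzer : ∃ x : H, (0:H) ∈ PhiOp A D {z : H | B z = 0} x)
    (xbar : ℝ → ℝ → H)
    (hxbar : ∀ ε β : ℝ, 0 < ε → 0 < β →
      (∃ a ∈ A (xbar ε β), a + D (xbar ε β) + ε • xbar ε β + β • B (xbar ε β) = 0) ∧
      (∀ z : H, (∃ a ∈ A z, a + D z + ε • z + β • B z = 0) → z = xbar ε β))
    (εs βs : ℕ → ℝ) (hεpos : ∀ n, 0 < εs n) (hβpos : ∀ n, 0 < βs n)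
    (hε0 : Tendsto εs atTop (nhds 0)) (hβinf : Tendsto βs atTop atTop)
    (hεβ : Tendsto (fun n => εs n * βs n) atTop atTop) :
    (∃ M : ℝ, ∀ n, ‖xbar (εs n) (βs n)‖ ≤ M) ∧
    Tendsto (fun n => ‖B (xbar (εs n) (βs n))‖) atTop (nhds 0) := by
  obtain ⟨p, a0, ha0, ξ, ⟨hpC, -⟩, hp⟩ := hzer
  have hBp : B p = 0 := hpC
  -- basic estimate
  have key : ∀ n, βs n * ⟪B (xbar (εs n) (βs n)), xbar (εs n) (βs n) - p⟫ ≤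
      ‖ξ‖ * (‖xbar (εs n) (βs n)‖ + ‖p‖) + εs n * (‖p‖ ^ 2 / 4) := by
    intro n
    obtain ⟨⟨a, ha, h⟩, -⟩ := hxbar (εs n) (βs n) (hεpos n) (hβpos n)
    generalize xbar (εs n) (βs n) = x at *
    have hm := hAmax.1 ha ha0
    have hD := hDmono x p
    have e : a - a0 = ξ - (D x - D p) - εs n • x - βs n • B x := by
      have h1 : a = -(D x + εs n • x + βs n • B x) := by
        rw [eq_neg_iff_add_eq_zero, ← h]; abel
      have h2 : a0 = -(D p + ξ) := by
        rw [eq_neg_iff_add_eq_zero, hp]; abel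
      rw [h1, h2]; abel
    rw [e, inner_sub_left, inner_sub_left, inner_sub_left, real_inner_smul_left,
      real_inner_smul_left] at hm
    have h3 : ⟪ξ, x - p⟫ ≤ ‖ξ‖ * (‖x‖ + ‖p‖) :=
      (real_inner_le_norm _ _).trans
        (mul_le_mul_of_nonneg_left (norm_sub_le _ _) (norm_nonneg _))
    have h4 : -⟪x, x - p⟫ ≤ ‖p‖ ^ 2 / 4 := by
      rw [inner_sub_right, real_inner_self_eq_norm_sq]
      nlinarith [real_inner_le_norm x p, sq_nonneg (‖x‖ - ‖p‖ / 2)]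
    have h5 := mul_le_mul_of_nonneg_left h4 (hεpos n).le
    linarith
  have coco : ∀ x, μ * ‖B x‖ ^ 2 ≤ ⟪B x, x - p⟫ := by
    intro x
    simpa [hBp] using hBcoco x p
  obtain ⟨R, hR⟩ := hBcoer 1
  set K : ℝ := ‖p‖ ^ 2 / (4 * μ) with hK
  have hKμ : K * (4 * μ) = ‖p‖ ^ 2 := by rw [hK]; field_simp
  have hK0 : 0 ≤ K := by positivity
  have low : ∀ x, R ≤ ‖x‖ → ‖x‖ - K ≤ 2 * ⟪B x, x - p⟫ := by
    intro x hx
    have h1 := hR x hx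
    have hx0 : 0 < ‖x‖ := by
      rcases (norm_nonneg x).eq_or_lt with h | h
      · rw [← h, div_zero] at h1; linarith
      · exact h
    rw [le_div_iff₀ hx0, one_mul, real_inner_comm] at h1
    have h2 := real_inner_le_norm (B x) p
    have h3 := coco x
    have h4 : ‖B x‖ * ‖p‖ ≤ μ * ‖B x‖ ^ 2 + K := by
      have : 0 ≤ (4 * μ) * (μ * ‖B x‖ ^ 2 + K - ‖B x‖ * ‖p‖) := by
        nlinarith [sq_nonneg (2 * μ * ‖B x‖ - ‖p‖)]
      have := nonneg_of_mul_nonneg_right this (by positivity)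
      linarith
    have h5 : ⟪B x, x - p⟫ = ⟪B x, x⟫ - ⟪B x, p⟫ := inner_sub_right _ _ _
    linarith
  have hεle : ∀ᶠ n in atTop, εs n ≤ 1 := hε0.eventually_le_const one_pos
  have bdd : ∃ M : ℝ, ∀ n, ‖xbar (εs n) (βs n)‖ ≤ M := by
    have hev : IsBoundedUnder (· ≤ ·) atTop (fun n => ‖xbar (εs n) (βs n)‖) := by
      refine ⟨max R (2 * K + 4 * (‖ξ‖ * ‖p‖ + ‖p‖ ^ 2 / 4)), ?_⟩
      rw [eventually_map]
      filter_upwards [hεle, hβinf.eventually_ge_atTop (4 * ‖ξ‖ + 1)] with n h1 h2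
      have hk := key n
      have hl := low (xbar (εs n) (βs n))
      generalize xbar (εs n) (βs n) = x at *
      rcases le_total ‖x‖ R with h | h
      · exact le_max_of_le_left h
      refine le_max_of_le_right ?_
      have hβ := hβpos n
      have hl' := mul_le_mul_of_nonneg_left (hl h) hβ.le
      have hq : 0 ≤ ‖p‖ ^ 2 / 4 := by positivity
      have hQ : 0 ≤ ‖ξ‖ * ‖p‖ + ‖p‖ ^ 2 / 4 := by positivity
      have h6 : εs n * (‖p‖ ^ 2 / 4) ≤ ‖p‖ ^ 2 / 4 := mul_le_of_le_one_left hq h1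
      have hβ1 : 1 ≤ βs n := by linarith [norm_nonneg ξ]
      have h7 := le_mul_of_one_le_left hQ hβ1
      have h8 := mul_le_mul_of_nonneg_right (show 4 * ‖ξ‖ ≤ βs n by linarith) (norm_nonneg x)
      refine le_of_mul_le_mul_left ?_ hβ
      nlinarith
    obtain ⟨M, hM⟩ := hev.bddAbove_range
    exact ⟨M, fun n => hM ⟨n, rfl⟩⟩
  refine ⟨bdd, ?_⟩
  obtain ⟨M, hM⟩ := bdd
  set Q : ℝ := (‖ξ‖ * (M + ‖p‖) + ‖p‖ ^ 2 / 4) / μ with hQ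
  have hlim : Tendsto (fun n => Q / βs n) atTop (nhds 0) := hβinf.const_div_atTop Q
  have hlim2 : Tendsto (fun n => √(Q / βs n)) atTop (nhds 0) := by
    simpa using hlim.sqrt
  refine squeeze_zero' (Eventually.of_forall fun n => norm_nonneg _) ?_ hlim2
  filter_upwards [hεle] with n h1
  apply Real.le_sqrt_of_sq_le
  have hβ := hβpos n
  rw [hQ, div_div, le_div_iff₀ (by positivity)]
  have hq : 0 ≤ ‖p‖ ^ 2 / 4 := by positivity
  have h6 : εs n * (‖p‖ ^ 2 / 4) ≤ ‖p‖ ^ 2 / 4 := mul_le_of_le_one_left hq h1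
  have h7 := mul_le_mul_of_nonneg_left (coco (xbar (εs n) (βs n))) hβ.le
  have h8 := mul_le_mul_of_nonneg_left (hM n) (norm_nonneg ξ)
  have h9 := key n
  nlinarith
end

section
/- Under the standing data, let (ε_n) and (β_n) be sequences in (0,∞) with ε_n → 0, β_n → ∞ and ε_n β_n → ∞, and for each n let x̄_n := x̄(ε_n, β_n) be the unique zero of Φ_{ε_n, β_n}. Then every weak cluster point of the sequence (x̄_n) (i.e. every weak limit of a subsequence) lies in C = {x ∈ H : B x = 0}. -/
open Filter Topology MeasureTheory
open scoped RealInnerProductSpace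

variable {H : Type*} [NormedAddCommGroup H] [InnerProductSpace ℝ H] [CompleteSpace H]

theorem weak_cluster_points_feasible
    (A : H → Set H) (D B : H → H) (η μ : ℝ) (hη : 0 < η) (hμ : 0 < μ)
    (hAmax : MaxMonoSV A)
    (hDmono : ∀ x y : H, (0:ℝ) ≤ ⟪D x - D y, x - y⟫)
    (hDlip : ∀ x y : H, ‖D x - D y‖ ≤ (1/η) * ‖x - y‖)
    (hBcoco : ∀ x y : H, μ * ‖B x - B y‖^2 ≤ ⟪B x - B y, x - y⟫)
    (hBcoer : ∀ M : ℝ, ∃ R : ℝ, ∀ x : H, R ≤ ‖x‖ → M ≤ ⟪x, B x⟫ / ‖x‖)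
    (hCne : {x : H | B x = 0}.Nonempty)
    (hANCmax : MaxMonoSV (fun x : H =>
      {w : H | ∃ a ∈ A x, ∃ ξ ∈ nCone {z : H | B z = 0} x, w = a + ξ}))
    (hADBmax : ∀ β : ℝ, 0 < β →
      MaxMonoSV (fun x : H => {w : H | ∃ a ∈ A x, w = a + D x + β • B x}))
    (hzer : ∃ x : H, (0:H) ∈ PhiOp A D {z : H | B z = 0} x)
    (xbar : ℝ → ℝ → H)
    (hxbar : ∀ ε β : ℝ, 0 < ε → 0 < β →
      (∃ a ∈ A (xbar ε β), a + D (xbar ε β) + ε • xbar ε β + β • B (xbar ε β) = 0) ∧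
      (∀ z : H, (∃ a ∈ A z, a + D z + ε • z + β • B z = 0) → z = xbar ε β))
    (εs βs : ℕ → ℝ) (hεpos : ∀ n, 0 < εs n) (hβpos : ∀ n, 0 < βs n)
    (hε0 : Tendsto εs atTop (nhds 0)) (hβinf : Tendsto βs atTop atTop)
    (hεβ : Tendsto (fun n => εs n * βs n) atTop atTop) :
    ∀ xinf : H,
    (∃ φ : ℕ → ℕ, StrictMono φ ∧
      ∀ y : H, Tendsto (fun k => ⟪xbar (εs (φ k)) (βs (φ k)), y⟫) atTop
        (nhds ⟪xinf, y⟫)) →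
    B xinf = 0 := by
  rintro xinf ⟨φ, hφ, hw⟩
  obtain ⟨z, a, ha, ξ, ⟨hzC, -⟩, hz0⟩ := hzer
  have hBz : B z = 0 := hzC
  have hφt := hφ.tendsto_atTop
  set x : ℕ → H := fun k => xbar (εs (φ k)) (βs (φ k)) with hx
  have hw' : ∀ y : H, Tendsto (fun k => ⟪x k, y⟫) atTop (nhds ⟪xinf, y⟫) := hw
  have hε' : Tendsto (fun k => εs (φ k)) atTop (nhds 0) := hε0.comp hφt
  have hβ' : Tendsto (fun k => (βs (φ k))⁻¹) atTop (nhds 0) :=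
    (tendsto_inv_atTop_zero.comp hβinf).comp hφt
  set c : ℕ → ℝ := fun k =>
    (βs (φ k))⁻¹ * (⟪x k, ξ⟫ - ⟪z, ξ⟫ + εs (φ k) * ⟪x k, z⟫) with hc
  have hc0 : Tendsto c atTop (nhds 0) := by
    have := hβ'.mul (((hw' ξ).sub_const ⟪z, ξ⟫).add (hε'.mul (hw' z)))
    simpa using this
  -- the key estimate
  have key : ∀ k, ⟪B (x k), x k - z⟫ ≤ c k := by
    intro k
    obtain ⟨⟨b, hb, hb0⟩, -⟩ := hxbar _ _ (hεpos (φ k)) (hβpos (φ k))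
    have hbe : b = -D (x k) - εs (φ k) • x k - βs (φ k) • B (x k) := by
      have : b = (b + D (x k) + εs (φ k) • x k + βs (φ k) • B (x k))
        - D (x k) - εs (φ k) • x k - βs (φ k) • B (x k) := by abel
      rw [this, show b + D (x k) + εs (φ k) • x k + βs (φ k) • B (x k) = 0 from hb0]
      abel
    have hae : a = -D z - ξ := by
      have : a = (a + D z + ξ) - D z - ξ := by abel
      rw [this, ← hz0]; abel
    have h1 : (0:ℝ) ≤ ⟪b - a, x k - z⟫ := hAmax.1 hb ha
    have h2 := hDmono (x k) z
    have e : b - a = -(D (x k) - D z) - εs (φ k) • x k - βs (φ k) • B (x k) + ξ := by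
      rw [hbe, hae]; abel
    rw [e, inner_add_left, inner_sub_left, inner_sub_left, inner_neg_left,
      real_inner_smul_left, real_inner_smul_left] at h1
    have h3 : ⟪ξ, x k - z⟫ = ⟪x k, ξ⟫ - ⟪z, ξ⟫ := by
      rw [inner_sub_right, real_inner_comm, real_inner_comm z]
    have h4 : ⟪x k, x k - z⟫ = ‖x k‖ ^ 2 - ⟪x k, z⟫ := by
      rw [inner_sub_right, real_inner_self_eq_norm_sq]
    rw [h3, h4] at h1
    have h5 : 0 ≤ εs (φ k) * ‖x k‖ ^ 2 := mul_nonneg (hεpos _).le (sq_nonneg _)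
    have h6 : βs (φ k) * ⟪B (x k), x k - z⟫
        ≤ ⟪x k, ξ⟫ - ⟪z, ξ⟫ + εs (φ k) * ⟪x k, z⟫ := by linarith
    exact (le_inv_mul_iff₀ (hβpos _)).2 h6
  have hBsq : Tendsto (fun k => ‖B (x k)‖ ^ 2) atTop (nhds 0) := by
    have h : Tendsto (fun k => μ⁻¹ * c k) atTop (nhds 0) := by
      simpa using hc0.const_mul μ⁻¹
    refine squeeze_zero (fun k => sq_nonneg _) (fun k => ?_) h
    rw [le_inv_mul_iff₀ hμ]
    have := hBcoco (x k) z
    rw [hBz, sub_zero] at this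
    exact this.trans (key k)
  have hBn : Tendsto (fun k => B (x k)) atTop (nhds 0) := by
    rw [tendsto_zero_iff_norm_tendsto_zero]
    have := hBsq.sqrt
    simpa using this
  have hl : Tendsto (fun k => μ * ‖B (x k) - B xinf‖ ^ 2) atTop
      (nhds (μ * ‖(0:H) - B xinf‖ ^ 2)) :=
    ((hBn.sub_const _).norm.pow 2).const_mul μ
  have hr : Tendsto (fun k => c k + ⟪B (x k), z - xinf⟫ - (⟪x k, B xinf⟫ - ⟪xinf, B xinf⟫)) atTop
      (nhds (0 + ⟪(0:H), z - xinf⟫ - (⟪xinf, B xinf⟫ - ⟪xinf, B xinf⟫))) :=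
    (hc0.add (hBn.inner tendsto_const_nhds)).sub ((hw' _).sub_const _)
  have hle := le_of_tendsto_of_tendsto' hl hr (fun k => by
    refine (hBcoco (x k) xinf).trans ?_
    have h1 := key k
    have e1 : ⟪B xinf, x k - xinf⟫ = ⟪x k, B xinf⟫ - ⟪xinf, B xinf⟫ := by
      rw [real_inner_comm, inner_sub_left]
    have e2 : ⟪B (x k), x k - xinf⟫ = ⟪B (x k), x k - z⟫ + ⟪B (x k), z - xinf⟫ := by
      rw [← inner_add_right]; congr 1; abel
    rw [inner_sub_left, e1, e2]
    linarith)
  simp only [inner_zero_left, sub_self, add_zero, zero_sub, norm_neg] at hle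
  have h0 : ‖B xinf‖ ^ 2 ≤ 0 := by
    by_contra h
    have := mul_pos hμ (not_le.1 h)
    linarith
  exact norm_eq_zero.1 (pow_eq_zero_iff (two_ne_zero)|>.1 (le_antisymm h0 (sq_nonneg _)))
end

section
/- Under the standing data, let (ε_n) and (β_n) be sequences in (0,∞) with ε_n → 0, β_n → ∞ and ε_n β_n → ∞, and for each n let x̄_n := x̄(ε_n, β_n) be the unique zero of Φ_{ε_n, β_n}. Then every weak cluster point of the sequence (x̄_n) lies in zer(Φ) = {x : 0 ∈ A x + D x + N_C(x)}. -/
open Filter Topology MeasureTheory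
open scoped RealInnerProductSpace

variable {H : Type*} [NormedAddCommGroup H] [InnerProductSpace ℝ H] [CompleteSpace H]

lemma MaxMonoSV.mem_of_rel {T : H → Set H} (hT : MaxMonoSV T) {x u : H}
    (h : ∀ y v, v ∈ T y → (0:ℝ) ≤ ⟪u - v, x - y⟫) : u ∈ T x := by
  refine hT.2 (fun z => T z ∪ {w | z = x ∧ w = u}) ?_ (fun z => Set.subset_union_left) x
    (Or.inr ⟨rfl, rfl⟩)
  rintro a b c d (hc | ⟨rfl, rfl⟩) (hd | ⟨rfl, rfl⟩)
  · exact hT.1 hc hd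
  · have := h _ _ hc
    rw [← inner_neg_neg, neg_sub, neg_sub]
    exact this
  · exact h _ _ hd
  · simp

lemma cauchy_aux (x : ℕ → H)
    (h : ∀ N n m : ℕ, N ≤ n → N ≤ m → ‖x n - x m‖^2 ≤ 8 * (1 / ((N:ℝ) + 1))) : CauchySeq x := by
  refine cauchySeq_of_le_tendsto_0 (fun N : ℕ => √(8 * (1 / ((N:ℝ) + 1)))) ?_ ?_
  · intro n m N hn hm
    rw [dist_eq_norm]
    exact Real.le_sqrt_of_sq_le (h N n m hn hm)
  · have h1 := (tendsto_one_div_add_atTop_nhds_zero_nat (𝕜 := ℝ)).const_mul 8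
    have h2 := (Real.continuous_sqrt.tendsto _).comp h1
    simpa [Function.comp_def] using h2

lemma mid_sq (a b : H) :
    ‖(1/2:ℝ) • (a + b)‖^2 = (‖a‖^2 + ‖b‖^2)/2 - ‖a - b‖^2/4 := by
  rw [norm_smul, mul_pow, norm_add_sq_real, norm_sub_sq_real]
  norm_num
  ring

/-- Minty's theorem for a graph that is maximal among monotone relations. -/
lemma minty_zero (G : H → H → Prop)
    (hmono : ∀ x y u v, G x u → G y v → (0:ℝ) ≤ ⟪u - v, x - y⟫)
    (hmax : ∀ x u, (∀ y v, G y v → (0:ℝ) ≤ ⟪u - v, x - y⟫) → G x u) :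
    ∃ x, G x (-x) := by
  -- the epigraph of the Fitzpatrick function
  let S : H → H → ℝ → Prop := fun x u r => ∀ y v, G y v → ⟪x, v⟫ + ⟪y, u⟫ - ⟪y, v⟫ ≤ r
  have hS : ∀ x u r, S x u r → ⟪x, u⟫ ≤ r := by
    intro x u r h
    by_contra hlt
    push Not at hlt
    have hG : G x u := by
      apply hmax
      intro y v hyv
      have := h y v hyv
      simp only [inner_sub_left, inner_sub_right]
      rw [real_inner_comm x u, real_inner_comm y u, real_inner_comm x v, real_inner_comm y v] at *
      linarith
    have := h x u hG
    linarith
  have hGS : ∀ y v, G y v → S y v ⟪y, v⟫ := by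
    intro y v h y' v' h'
    have := hmono _ _ _ _ h h'
    simp only [inner_sub_left, inner_sub_right] at this
    have e1 := real_inner_comm y v
    have e2 := real_inner_comm y v'
    have e3 := real_inner_comm y' v
    have e4 := real_inner_comm y' v'
    linarith
  have hne : ∃ y v, G y v := by
    by_contra hcon
    push Not at hcon
    exact hcon 0 0 (hmax 0 0 (fun y v h => absurd h (hcon y v)))
  let g : H → H → ℝ → ℝ := fun x u r => r + ‖x‖^2/2 + ‖u‖^2/2
  have hg0 : ∀ x u r, S x u r → 0 ≤ g x u r := by
    intro x u r h
    have h1 := hS x u r h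
    have h2 : 0 ≤ ‖x + u‖^2 := sq_nonneg _
    rw [norm_add_sq_real] at h2
    simp only [g]
    linarith
  let V : Set ℝ := {c | ∃ x u r, S x u r ∧ c = g x u r}
  have hVne : V.Nonempty := by
    obtain ⟨y, v, h⟩ := hne
    exact ⟨_, y, v, _, hGS y v h, rfl⟩
  have hVbd : BddBelow V := ⟨0, by rintro c ⟨x, u, r, h, rfl⟩; exact hg0 _ _ _ h⟩
  let m := sInf V
  have hm : ∀ x u r, S x u r → m ≤ g x u r := fun x u r h => csInf_le hVbd ⟨x, u, r, h, rfl⟩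
  have hex : ∀ n : ℕ, ∃ x u r, S x u r ∧ g x u r < m + 1 / ((n:ℝ) + 1) := by
    intro n
    have : m < m + 1 / ((n:ℝ) + 1) := by
      have : (0:ℝ) < 1 / ((n:ℝ) + 1) := by positivity
      linarith
    obtain ⟨c, ⟨x, u, r, h, rfl⟩, hc⟩ := exists_lt_of_csInf_lt hVne this
    exact ⟨x, u, r, h, hc⟩
  choose x u r hSn hgn using hex
  have hcomb : ∀ x u r x' u' r' (t : ℝ), 0 ≤ t → t ≤ 1 → S x u r → S x' u' r' →
      S (x + t • (x' - x)) (u + t • (u' - u)) (r + t * (r' - r)) := by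
    intro x u r x' u' r' t ht0 ht1 h h' y v hyv
    have a := h y v hyv
    have b := h' y v hyv
    simp only [inner_add_left, inner_add_right, inner_sub_left, inner_sub_right,
      real_inner_smul_left, real_inner_smul_right]
    nlinarith [mul_le_mul_of_nonneg_left a (sub_nonneg.2 ht1), mul_le_mul_of_nonneg_left b ht0]
  have hmid : ∀ N n k : ℕ, N ≤ n → N ≤ k →
      ‖x n - x k‖^2 + ‖u n - u k‖^2 ≤ 8 * (1 / ((N:ℝ) + 1)) := by
    intro N n k hn hk
    have h1 := hm _ _ _ (hcomb _ _ _ _ _ _ (1/2) (by norm_num) (by norm_num) (hSn n) (hSn k))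
    have e : ∀ a b : H, a + (1/2:ℝ) • (b - a) = (1/2:ℝ) • (a + b) := by
      intro a b; module
    rw [e, e] at h1
    simp only [g, mid_sq] at h1
    have h2 := hgn n
    have h3 := hgn k
    simp only [g] at h2 h3
    have h4 : 1 / ((n:ℝ) + 1) ≤ 1 / ((N:ℝ) + 1) := by gcongr
    have h5 : 1 / ((k:ℝ) + 1) ≤ 1 / ((N:ℝ) + 1) := by gcongr
    linarith
  obtain ⟨x0, hx0⟩ := cauchySeq_tendsto_of_complete (cauchy_aux x (fun N n k hn hk => by
    nlinarith [hmid N n k hn hk, sq_nonneg ‖u n - u k‖]))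
  obtain ⟨u0, hu0⟩ := cauchySeq_tendsto_of_complete (cauchy_aux u (fun N n k hn hk => by
    nlinarith [hmid N n k hn hk, sq_nonneg ‖x n - x k‖]))
  -- the third coordinate of the limit
  obtain ⟨r0, hr0⟩ : ∃ r0, r0 = m - ‖x0‖^2/2 - ‖u0‖^2/2 := ⟨_, rfl⟩
  have hS0 : S x0 u0 r0 := by
    intro y v hyv
    have hL : Tendsto (fun n => ⟪x n, v⟫ + ⟪y, u n⟫ - ⟪y, v⟫) atTop
        (𝓝 (⟪x0, v⟫ + ⟪y, u0⟫ - ⟪y, v⟫)) :=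
      ((hx0.inner tendsto_const_nhds).add (tendsto_const_nhds.inner hu0)).sub_const _
    have hR : Tendsto (fun n : ℕ => m + 1 / ((n:ℝ) + 1) - ‖x n‖^2/2 - ‖u n‖^2/2) atTop
        (𝓝 (m + 0 - ‖x0‖^2/2 - ‖u0‖^2/2)) :=
      (((tendsto_one_div_add_atTop_nhds_zero_nat (𝕜 := ℝ)).const_add m).sub
        ((hx0.norm.pow 2).div_const 2)).sub ((hu0.norm.pow 2).div_const 2)
    have := le_of_tendsto_of_tendsto' hL hR (fun n => by
      have h1 := hSn n y v hyv
      have h2 := hgn n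
      simp only [g] at h2
      linarith)
    rw [hr0]
    linarith
  have hvar : ∀ x' u' r', S x' u' r' →
      0 ≤ (r' - r0) + ⟪x0, x' - x0⟫ + ⟪u0, u' - u0⟫ := by
    intro x' u' r' h'
    obtain ⟨Q, hQ⟩ : ∃ Q, Q = (‖x' - x0‖^2 + ‖u' - u0‖^2)/2 := ⟨_, rfl⟩
    have key : ∀ t : ℝ, 0 < t → t ≤ 1 →
        0 ≤ (r' - r0) + ⟪x0, x' - x0⟫ + ⟪u0, u' - u0⟫ + t * Q := by
      intro t ht0 ht1
      have h1 := hm _ _ _ (hcomb _ _ _ _ _ _ t ht0.le ht1 hS0 h')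
      simp only [g] at h1
      rw [norm_add_sq_real, norm_add_sq_real, real_inner_smul_right, real_inner_smul_right,
        norm_smul, norm_smul, mul_pow, mul_pow, Real.norm_eq_abs, sq_abs] at h1
      have h2 : 0 ≤ t * ((r' - r0) + ⟪x0, x' - x0⟫ + ⟪u0, u' - u0⟫ + t * Q) := by
        rw [hQ]
        nlinarith
      exact nonneg_of_mul_nonneg_right h2 ht0
    have hlim : Tendsto (fun t : ℝ => (r' - r0) + ⟪x0, x' - x0⟫ + ⟪u0, u' - u0⟫ + t * Q)
        (𝓝[>] 0) (𝓝 ((r' - r0) + ⟪x0, x' - x0⟫ + ⟪u0, u' - u0⟫ + 0 * Q)) := by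
      refine Tendsto.mono_left ?_ nhdsWithin_le_nhds
      exact (Continuous.tendsto (by fun_prop) 0)
    have := ge_of_tendsto hlim (by
      filter_upwards [Ioc_mem_nhdsGT (zero_lt_one (α := ℝ))] with t ht
      exact key t ht.1 ht.2)
    simpa using this
  have hrel : ∀ y v, G y v → ‖x0 + u0‖^2 ≤ ⟪-x0 - v, -u0 - y⟫ := by
    intro y v hyv
    have h1 := hvar y v _ (hGS y v hyv)
    have h2 := hS _ _ _ hS0
    rw [norm_add_sq_real]
    simp only [inner_sub_left, inner_sub_right, inner_neg_left, inner_neg_right,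
      real_inner_self_eq_norm_sq] at h1 ⊢
    have e1 := real_inner_comm y v
    have e2 := real_inner_comm v u0
    linarith
  have hG : G (-u0) (-x0) := hmax _ _ (fun y v h => (sq_nonneg _).trans (hrel y v h))
  have h0 := hrel _ _ hG
  simp only [sub_self, inner_zero_left] at h0
  have h1 : x0 + u0 = 0 := by
    have : ‖x0 + u0‖^2 = 0 := le_antisymm h0 (sq_nonneg _)
    simpa using this
  have h2 : -u0 = x0 := (eq_neg_of_add_eq_zero_left h1).symm
  rw [h2] at hG
  exact ⟨x0, hG⟩

/-- Surjectivity of `T + l Id`. -/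
lemma MaxMonoSV.resolvent {T : H → Set H} (hT : MaxMonoSV T) {l : ℝ} (hl : 0 < l) (w : H) :
    ∃ x, w - l • x ∈ T x := by
  obtain ⟨x, hx⟩ := minty_zero (fun y v => w + l • v ∈ T y) (by
    intro x y u v hu hv
    have := hT.1 hu hv
    rw [add_sub_add_left_eq_sub, ← smul_sub, real_inner_smul_left] at this
    exact nonneg_of_mul_nonneg_right this hl) (by
    intro x u h
    apply hT.mem_of_rel
    intro y v hv
    have := h y (l⁻¹ • (v - w)) (by rw [smul_inv_smul₀ hl.ne']; simpa using hv)
    have e : w + l • u - v = l • (u - l⁻¹ • (v - w)) := by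
      rw [smul_sub, smul_inv_smul₀ hl.ne']; abel
    rw [e, real_inner_smul_left]
    exact mul_nonneg hl.le this)
  refine ⟨x, ?_⟩
  simpa [sub_eq_add_neg] using hx

/-- Maximality of the sum of a maximally monotone operator and a monotone Lipschitz map. -/
lemma MaxMonoSV.add_lip {T : H → Set H} (hT : MaxMonoSV T) (D : H → H) {L : ℝ} (hL : 0 < L)
    (hDlip : ∀ x y : H, ‖D x - D y‖ ≤ L * ‖x - y‖) (x : H)
    (h : ∀ y v, v ∈ T y → (0:ℝ) ≤ ⟪-(v + D y), x - y⟫) : -D x ∈ T x := by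
  obtain ⟨l, hl⟩ : ∃ l, l = 2 * L := ⟨_, rfl⟩
  have hl0 : 0 < l := by linarith
  choose R hR using fun w => hT.resolvent hl0 w
  have hRlip : ∀ p q, l * ‖R p - R q‖ ≤ ‖p - q‖ := by
    intro p q
    have h1 := hT.1 (hR p) (hR q)
    have e : p - l • R p - (q - l • R q) = (p - q) - l • (R p - R q) := by module
    rw [e, inner_sub_left, real_inner_smul_left, real_inner_self_eq_norm_sq] at h1
    have h2 := real_inner_le_norm (p - q) (R p - R q)
    rcases (norm_nonneg (R p - R q)).eq_or_lt with h3 | h3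
    · rw [← h3]; simp
    · nlinarith
  let f : H → H := fun y => R (l • x - D y)
  have hf : ContractingWith (1/2) f := by
    refine ⟨by rw [← NNReal.coe_lt_coe]; norm_num, LipschitzWith.of_dist_le_mul ?_⟩
    intro a b
    rw [dist_eq_norm, dist_eq_norm]
    have h1 := hRlip (l • x - D a) (l • x - D b)
    rw [sub_sub_sub_cancel_left, ] at h1
    have h2 := hDlip b a
    rw [norm_sub_rev b a] at h2
    have h3 : L * (2 * ‖f a - f b‖) ≤ L * ‖a - b‖ := by
      simp only [f]
      rw [hl] at h1 ⊢
      linarith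
    have h4 := le_of_mul_le_mul_left h3 hL
    push_cast
    linarith
  let y := hf.fixedPoint f
  have hy : f y = y := hf.fixedPoint_isFixedPt
  have hmem : l • x - D y - l • y ∈ T y := by
    have := hR (l • x - D y)
    change _ - l • f y ∈ T (f y) at this
    rwa [hy] at this
  have h1 := h y _ hmem
  have e : -(l • x - D y - l • y + D y) = -(l • (x - y)) := by module
  rw [e, inner_neg_left, real_inner_smul_left, real_inner_self_eq_norm_sq] at h1
  have h2 : ‖x - y‖^2 = 0 := by
    have := sq_nonneg ‖x - y‖
    nlinarith
  have h3 : x = y := by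
    rw [← sub_eq_zero]; simpa using h2
  rw [← h3] at hmem
  simpa using hmem

theorem weak_cluster_points_solve
    (A : H → Set H) (D B : H → H) (η μ : ℝ) (hη : 0 < η) (hμ : 0 < μ)
    (hAmax : MaxMonoSV A)
    (hDmono : ∀ x y : H, (0:ℝ) ≤ ⟪D x - D y, x - y⟫)
    (hDlip : ∀ x y : H, ‖D x - D y‖ ≤ (1/η) * ‖x - y‖)
    (hBcoco : ∀ x y : H, μ * ‖B x - B y‖^2 ≤ ⟪B x - B y, x - y⟫)
    (hBcoer : ∀ M : ℝ, ∃ R : ℝ, ∀ x : H, R ≤ ‖x‖ → M ≤ ⟪x, B x⟫ / ‖x‖)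
    (hCne : {x : H | B x = 0}.Nonempty)
    (hANCmax : MaxMonoSV (fun x : H =>
      {w : H | ∃ a ∈ A x, ∃ ξ ∈ nCone {z : H | B z = 0} x, w = a + ξ}))
    (hADBmax : ∀ β : ℝ, 0 < β →
      MaxMonoSV (fun x : H => {w : H | ∃ a ∈ A x, w = a + D x + β • B x}))
    (hzer : ∃ x : H, (0:H) ∈ PhiOp A D {z : H | B z = 0} x)
    (xbar : ℝ → ℝ → H)
    (hxbar : ∀ ε β : ℝ, 0 < ε → 0 < β →
      (∃ a ∈ A (xbar ε β), a + D (xbar ε β) + ε • xbar ε β + β • B (xbar ε β) = 0) ∧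
      (∀ z : H, (∃ a ∈ A z, a + D z + ε • z + β • B z = 0) → z = xbar ε β))
    (εs βs : ℕ → ℝ) (hεpos : ∀ n, 0 < εs n) (hβpos : ∀ n, 0 < βs n)
    (hε0 : Tendsto εs atTop (nhds 0)) (hβinf : Tendsto βs atTop atTop)
    (hεβ : Tendsto (fun n => εs n * βs n) atTop atTop) :
    ∀ xinf : H,
    (∃ φ : ℕ → ℕ, StrictMono φ ∧
      ∀ y : H, Tendsto (fun k => ⟪xbar (εs (φ k)) (βs (φ k)), y⟫) atTop
        (nhds ⟪xinf, y⟫)) →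
    (0:H) ∈ PhiOp A D {z : H | B z = 0} xinf := by
  rintro xinf ⟨φ, hφ, hw⟩
  obtain ⟨X, hX⟩ : ∃ X : ℕ → H, X = fun k => xbar (εs (φ k)) (βs (φ k)) := ⟨_, rfl⟩
  obtain ⟨e, he⟩ : ∃ e : ℕ → ℝ, e = fun k => εs (φ k) := ⟨_, rfl⟩
  obtain ⟨b, hb⟩ : ∃ b : ℕ → ℝ, b = fun k => βs (φ k) := ⟨_, rfl⟩
  have hw' : ∀ y : H, Tendsto (fun k => ⟪X k, y⟫) atTop (𝓝 ⟪xinf, y⟫) := by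
    rw [hX]; exact hw
  have he0 : Tendsto e atTop (𝓝 0) := by rw [he]; exact hε0.comp hφ.tendsto_atTop
  have hbinf : Tendsto b atTop atTop := by rw [hb]; exact hβinf.comp hφ.tendsto_atTop
  have hep : ∀ k, 0 < e k := by intro k; rw [he]; exact hεpos _
  have hbp : ∀ k, 0 < b k := by intro k; rw [hb]; exact hβpos _
  have hXz : ∀ k, ∃ a ∈ A (X k), a + D (X k) + e k • X k + b k • B (X k) = 0 := by
    intro k
    rw [hX, he, hb]
    exact (hxbar _ _ (hεpos _) (hβpos _)).1
  -- the basic estimate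
  have hest : ∀ u a, a ∈ A u → ∀ k,
      b k * ⟪B (X k), X k - u⟫ ≤ e k * (‖u‖^2/4) - ⟪a + D u, X k - u⟫ := by
    intro u a ha k
    obtain ⟨c, hc, hc0⟩ := hXz k
    have h1 := hAmax.1 hc ha
    have h2 := hDmono (X k) u
    have h3 : c = -(D (X k) + e k • X k + b k • B (X k)) := by
      rw [← add_eq_zero_iff_eq_neg, ← hc0]; abel
    have h4 : -(‖u‖^2/4) ≤ ⟪X k, X k - u⟫ := by
      rw [inner_sub_right, real_inner_self_eq_norm_sq]
      have h5 := real_inner_le_norm (X k) u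
      nlinarith [sq_nonneg (‖X k‖ - ‖u‖/2)]
    have h5 := mul_le_mul_of_nonneg_left h4 (hep k).le
    rw [h3] at h1
    simp only [inner_sub_left, inner_neg_left, inner_add_left, real_inner_smul_left] at h1 h2 ⊢
    linarith
  have hwsub : ∀ y u : H, Tendsto (fun k => ⟪y, X k - u⟫) atTop (𝓝 ⟪y, xinf - u⟫) := by
    intro y u
    have := (hw' y).sub_const ⟪y, u⟫
    simpa only [inner_sub_right, real_inner_comm] using this
  have hlimR : ∀ y u : H, Tendsto (fun k => e k * (‖u‖^2/4) - ⟪y, X k - u⟫) atTop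
      (𝓝 (-⟪y, xinf - u⟫)) := by
    intro y u
    have := (he0.mul_const (‖u‖^2/4)).sub (hwsub y u)
    simpa using this
  have hBC : ∀ u, B u = 0 → ∀ x, μ * ‖B x‖^2 ≤ ⟪B x, x - u⟫ := by
    intro u hu x
    have := hBcoco x u
    rwa [hu, sub_zero] at this
  -- the cluster point lies in `C`
  obtain ⟨p, a0, ha0, ξ0, ⟨hpC, -⟩, -⟩ := hzer
  have hpC' : B p = 0 := hpC
  have hq : Tendsto (fun k => ⟪B (X k), X k - p⟫) atTop (𝓝 0) := by
    have hub : Tendsto (fun k => (e k * (‖p‖^2/4) - ⟪a0 + D p, X k - p⟫) / b k) atTop (𝓝 0) :=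
      (hlimR (a0 + D p) p).div_atTop hbinf
    refine tendsto_of_tendsto_of_tendsto_of_le_of_le tendsto_const_nhds hub ?_ ?_
    · intro k
      exact le_trans (by positivity) (hBC p hpC' (X k))
    · intro k
      simp only
      rw [le_div_iff₀ (hbp k), mul_comm]
      exact hest p a0 ha0 k
  have hsq : ∀ z : ℕ → H, ∀ s : ℕ → ℝ, (∀ k, μ * ‖z k‖^2 ≤ s k) → Tendsto s atTop (𝓝 0) →
      Tendsto z atTop (𝓝 0) := by
    intro z s hz hs
    rw [tendsto_zero_iff_norm_tendsto_zero]
    have h1 : Tendsto (fun k => √(s k / μ)) atTop (𝓝 0) := by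
      have := (Real.continuous_sqrt.tendsto _).comp (hs.div_const μ)
      simpa [Function.comp_def] using this
    refine tendsto_of_tendsto_of_tendsto_of_le_of_le tendsto_const_nhds h1
      (fun k => norm_nonneg _) (fun k => ?_)
    apply Real.le_sqrt_of_sq_le
    rw [le_div_iff₀ hμ, mul_comm]
    exact hz k
  have hB0 : Tendsto (fun k => B (X k)) atTop (𝓝 0) :=
    hsq _ _ (fun k => hBC p hpC' (X k)) hq
  have hB1 : Tendsto (fun k => B (X k) - B xinf) atTop (𝓝 0) := by
    refine hsq _ _ (fun k => hBcoco (X k) xinf) ?_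
    have h1 : Tendsto (fun k => ⟪B (X k), p - xinf⟫) atTop (𝓝 ⟪(0:H), p - xinf⟫) :=
      hB0.inner tendsto_const_nhds
    have h2 := (hq.add h1).sub (hwsub (B xinf) xinf)
    have h3 : ∀ k, ⟪B (X k), X k - p⟫ + ⟪B (X k), p - xinf⟫ - ⟪B xinf, X k - xinf⟫
        = ⟪B (X k) - B xinf, X k - xinf⟫ := by
      intro k
      rw [← inner_add_right, sub_add_sub_cancel, inner_sub_left]
    simpa [h3] using h2
  have hxC : B xinf = 0 := by
    have h1 := hB0.sub hB1
    simp only [sub_sub_cancel, sub_zero] at h1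
    exact tendsto_nhds_unique tendsto_const_nhds h1
  -- conclusion by maximality
  have hfin := hANCmax.add_lip D (L := 1/η) (by positivity) hDlip xinf (by
    rintro u v ⟨a, ha, ξ, ⟨huC, hξ⟩, rfl⟩
    have huC' : B u = 0 := huC
    have h1 : 0 ≤ -⟪a + D u, xinf - u⟫ := by
      refine ge_of_tendsto' (hlimR (a + D u) u) (fun k => ?_)
      refine le_trans ?_ (hest u a ha k)
      exact mul_nonneg (hbp k).le (le_trans (by positivity) (hBC u huC' (X k)))
    have h2 := hξ xinf hxC
    simp only [inner_neg_left, inner_add_left] at h1 ⊢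
    linarith)
  obtain ⟨a, ha, ξ, hξ, hsum⟩ := hfin
  refine ⟨a, ha, ξ, hξ, ?_⟩
  have : a + D xinf + ξ = (a + ξ) + D xinf := by abel
  rw [this, ← hsum]
  simp
end

section
/- Let H be a real Hilbert space, A : H → Set H monotone, D : H → H monotone, B : H → H monotone, and fix β > 0. Let ε₁, ε₂ > 0 and suppose z₁, z₂ ∈ H satisfy 0 ∈ A z_i + D z_i + ε_i z_i + β B z_i for i = 1, 2. Then ‖z₁ − z₂‖ ≤ (|ε₂ − ε₁| / min(ε₁, ε₂)) · max(‖z₁‖, ‖z₂‖). -/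
open scoped RealInnerProductSpace

/-- Lipschitz dependence of the regularized solutions on the Tikhonov
parameter `ε`, for fixed penalty parameter `β`. -/
theorem solution_map_lipschitz_in_epsilon
    {H : Type*} [NormedAddCommGroup H] [InnerProductSpace ℝ H]
    (A : H → Set H) (D B : H → H)
    (hAmono : ∀ ⦃x y u v : H⦄, u ∈ A x → v ∈ A y → (0:ℝ) ≤ ⟪u - v, x - y⟫)
    (hDmono : ∀ x y : H, (0:ℝ) ≤ ⟪D x - D y, x - y⟫)
    (hBmono : ∀ x y : H, (0:ℝ) ≤ ⟪B x - B y, x - y⟫)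
    (β : ℝ) (hβ : 0 < β) (ε₁ ε₂ : ℝ) (hε₁ : 0 < ε₁) (hε₂ : 0 < ε₂)
    (z₁ z₂ a₁ a₂ : H)
    (ha₁ : a₁ ∈ A z₁) (hz₁ : a₁ + D z₁ + ε₁ • z₁ + β • B z₁ = 0)
    (ha₂ : a₂ ∈ A z₂) (hz₂ : a₂ + D z₂ + ε₂ • z₂ + β • B z₂ = 0) :
    ‖z₁ - z₂‖ ≤ (|ε₂ - ε₁| / min ε₁ ε₂) * max ‖z₁‖ ‖z₂‖ := by
  have hA := hAmono ha₁ ha₂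
  have hD := hDmono z₁ z₂
  have hB := mul_nonneg hβ.le (hBmono z₁ z₂)
  have hsum : (a₁ - a₂) + (D z₁ - D z₂) + β • (B z₁ - B z₂)
      = (ε₂ - ε₁) • z₂ - ε₁ • (z₁ - z₂) := by
    have h : (a₁ + D z₁ + ε₁ • z₁ + β • B z₁) - (a₂ + D z₂ + ε₂ • z₂ + β • B z₂) = 0 := by
      rw [hz₁, hz₂, sub_zero]
    rw [← sub_eq_zero, ← h]
    module
  have hin := congrArg (fun w : H => ⟪w, z₁ - z₂⟫) hsum
  simp only [inner_add_left, inner_sub_left (𝕜 := ℝ) (_ • _) (_ • _), real_inner_smul_left,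
    real_inner_self_eq_norm_sq] at hin
  have hcs : (ε₂ - ε₁) * ⟪z₂, z₁ - z₂⟫ ≤ |ε₂ - ε₁| * (‖z₂‖ * ‖z₁ - z₂‖) := by
    refine (le_abs_self _).trans ?_
    rw [abs_mul]
    exact mul_le_mul_of_nonneg_left (abs_real_inner_le_norm _ _) (abs_nonneg _)
  have hmin : 0 < min ε₁ ε₂ := lt_min hε₁ hε₂
  have key : ε₁ * ‖z₁ - z₂‖ ≤ |ε₂ - ε₁| * ‖z₂‖ := by
    rcases (norm_nonneg (z₁ - z₂)).eq_or_lt with h0 | h0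
    · rw [← h0, mul_zero]; positivity
    · refine le_of_mul_le_mul_right ?_ h0
      nlinarith
  rw [div_mul_eq_mul_div, le_div_iff₀ hmin]
  calc ‖z₁ - z₂‖ * min ε₁ ε₂ ≤ ‖z₁ - z₂‖ * ε₁ := by
        gcongr; exact min_le_left _ _
    _ ≤ |ε₂ - ε₁| * ‖z₂‖ := by linarith
    _ ≤ |ε₂ - ε₁| * max ‖z₁‖ ‖z₂‖ := by
        gcongr; exact le_max_right _ _
end

section
/- Let H be a real Hilbert space, A : H → Set H monotone, D : H → H monotone, B : H → H monotone, and fix ε > 0. Let β₁, β₂ > 0 and suppose z₁, z₂ ∈ H satisfy 0 ∈ A z_i + D z_i + ε z_i + β_i B z_i for i = 1, 2. Then ‖z₁ − z₂‖ ≤ (|β₁ − β₂| / ε) · max(‖B z₁‖, ‖B z₂‖). -/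
open scoped RealInnerProductSpace

/-- Lipschitz dependence of the regularized solutions on the penalty
parameter `β`, for fixed Tikhonov parameter `ε`. -/
theorem solution_map_lipschitz_in_beta
    {H : Type*} [NormedAddCommGroup H] [InnerProductSpace ℝ H]
    (A : H → Set H) (D B : H → H)
    (hAmono : ∀ ⦃x y u v : H⦄, u ∈ A x → v ∈ A y → (0:ℝ) ≤ ⟪u - v, x - y⟫)
    (hDmono : ∀ x y : H, (0:ℝ) ≤ ⟪D x - D y, x - y⟫)
    (hBmono : ∀ x y : H, (0:ℝ) ≤ ⟪B x - B y, x - y⟫)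
    (ε : ℝ) (hε : 0 < ε) (β₁ β₂ : ℝ) (hβ₁ : 0 < β₁) (hβ₂ : 0 < β₂)
    (z₁ z₂ a₁ a₂ : H)
    (ha₁ : a₁ ∈ A z₁) (hz₁ : a₁ + D z₁ + ε • z₁ + β₁ • B z₁ = 0)
    (ha₂ : a₂ ∈ A z₂) (hz₂ : a₂ + D z₂ + ε • z₂ + β₂ • B z₂ = 0) :
    ‖z₁ - z₂‖ ≤ (|β₁ - β₂| / ε) * max ‖B z₁‖ ‖B z₂‖ := by
  have hA := hAmono ha₁ ha₂
  have hD := hDmono z₁ z₂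
  have hB := mul_nonneg hβ₁.le (hBmono z₁ z₂)
  have key : (a₁ - a₂) + (D z₁ - D z₂) + ε • (z₁ - z₂) + β₁ • (B z₁ - B z₂)
      + (β₁ - β₂) • B z₂ = 0 := by
    have h : (a₁ - a₂) + (D z₁ - D z₂) + ε • (z₁ - z₂) + β₁ • (B z₁ - B z₂)
      + (β₁ - β₂) • B z₂ = (a₁ + D z₁ + ε • z₁ + β₁ • B z₁)
        - (a₂ + D z₂ + ε • z₂ + β₂ • B z₂) := by module
    rw [h, hz₁, hz₂, sub_zero]
  have hk := congrArg (fun w => inner ℝ w (z₁ - z₂)) key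
  generalize z₁ - z₂ = d at *
  simp only [inner_add_left, real_inner_smul_left, inner_zero_left,
    real_inner_self_eq_norm_sq] at hk
  have hcs : -((β₁ - β₂) * inner ℝ (B z₂) d) ≤ |β₁ - β₂| * (‖B z₂‖ * ‖d‖) := by
    refine (neg_le_abs _).trans ?_
    rw [abs_mul]
    exact mul_le_mul_of_nonneg_left (abs_real_inner_le_norm _ _) (abs_nonneg _)
  have hm : |β₁ - β₂| * ‖B z₂‖ ≤ |β₁ - β₂| * max ‖B z₁‖ ‖B z₂‖ :=
    mul_le_mul_of_nonneg_left (le_max_right _ _) (abs_nonneg _)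
  have h1 : ε * ‖d‖ ≤ |β₁ - β₂| * max ‖B z₁‖ ‖B z₂‖ := by
    rcases (norm_nonneg d).eq_or_lt with h0 | h0
    · rw [← h0, mul_zero]; positivity
    · refine le_trans ?_ hm
      refine le_of_mul_le_mul_right ?_ h0
      linarith
  rw [div_mul_eq_mul_div, le_div_iff₀ hε, mul_comm]
  exact h1
end

section
/- Let H be a real Hilbert space, A : H → Set H monotone, D : H → H monotone, and B : H → H monotone. Let ε₁, ε₂, β₁, β₂ > 0 and suppose z₁, z₂ ∈ H satisfy 0 ∈ A z_i + D z_i + ε_i z_i + β_i B z_i for i = 1, 2. Then ‖z₂ − z₁‖ ≤ (|β₂ − β₁| / ε₁) ‖B z₁‖ + (|ε₂ − ε₁| / ε₁) ‖z₂‖. -/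
open scoped RealInnerProductSpace

/-- joint Lipschitz-type estimate for the solution map `(ε,β) ↦ x̄(ε,β)`. -/
theorem solution_map_joint_estimate
    {H : Type*} [NormedAddCommGroup H] [InnerProductSpace ℝ H]
    (A : H → Set H) (D B : H → H)
    (hAmono : ∀ ⦃x y u v : H⦄, u ∈ A x → v ∈ A y → (0:ℝ) ≤ ⟪u - v, x - y⟫)
    (hDmono : ∀ x y : H, (0:ℝ) ≤ ⟪D x - D y, x - y⟫)
    (hBmono : ∀ x y : H, (0:ℝ) ≤ ⟪B x - B y, x - y⟫)
    (ε₁ ε₂ β₁ β₂ : ℝ) (hε₁ : 0 < ε₁) (hε₂ : 0 < ε₂) (hβ₁ : 0 < β₁) (hβ₂ : 0 < β₂)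
    (z₁ z₂ a₁ a₂ : H)
    (ha₁ : a₁ ∈ A z₁) (hz₁ : a₁ + D z₁ + ε₁ • z₁ + β₁ • B z₁ = 0)
    (ha₂ : a₂ ∈ A z₂) (hz₂ : a₂ + D z₂ + ε₂ • z₂ + β₂ • B z₂ = 0) :
    ‖z₂ - z₁‖ ≤ (|β₂ - β₁| / ε₁) * ‖B z₁‖ + (|ε₂ - ε₁| / ε₁) * ‖z₂‖ := by
  have hA := hAmono ha₂ ha₁
  have hD := hDmono z₂ z₁
  have hB := mul_nonneg hβ₂.le (hBmono z₂ z₁)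
  have key : (a₂ - a₁) + (D z₂ - D z₁) + ε₁ • (z₂ - z₁) + (ε₂ - ε₁) • z₂
      + β₂ • (B z₂ - B z₁) + (β₂ - β₁) • B z₁ = 0 := by
    have h : (a₂ + D z₂ + ε₂ • z₂ + β₂ • B z₂) - (a₁ + D z₁ + ε₁ • z₁ + β₁ • B z₁) = 0 := by
      rw [hz₁, hz₂, sub_zero]
    rw [← h]
    module
  have h2 := congrArg (fun x => ⟪x, z₂ - z₁⟫) key
  simp only [inner_add_left, real_inner_smul_left, inner_zero_left] at h2
  rw [real_inner_self_eq_norm_sq] at h2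
  have h3 : -((ε₂ - ε₁) * ⟪z₂, z₂ - z₁⟫) ≤ |ε₂ - ε₁| * (‖z₂‖ * ‖z₂ - z₁‖) := by
    refine (neg_le_abs _).trans ?_
    rw [abs_mul]
    exact mul_le_mul_of_nonneg_left (abs_real_inner_le_norm _ _) (abs_nonneg _)
  have h4 : -((β₂ - β₁) * ⟪B z₁, z₂ - z₁⟫) ≤ |β₂ - β₁| * (‖B z₁‖ * ‖z₂ - z₁‖) := by
    refine (neg_le_abs _).trans ?_
    rw [abs_mul]
    exact mul_le_mul_of_nonneg_left (abs_real_inner_le_norm _ _) (abs_nonneg _)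
  have e : (|β₂ - β₁| / ε₁) * ‖B z₁‖ + (|ε₂ - ε₁| / ε₁) * ‖z₂‖
      = (|β₂ - β₁| * ‖B z₁‖ + |ε₂ - ε₁| * ‖z₂‖) / ε₁ := by ring
  rw [e, le_div_iff₀ hε₁]
  rcases (norm_nonneg (z₂ - z₁)).eq_or_lt with h0 | h0
  · rw [← h0, zero_mul]
    positivity
  · refine le_of_mul_le_mul_right ?_ h0
    linarith
end

section
/- Under the standing data, let ε, β : [0,∞) → (0,∞) be absolutely continuous with ε nonincreasing and ε(t) → 0, β nondecreasing and β(t) → ∞, and ε(t)β(t) → ∞ as t → ∞. Let x̄(t) := x̄(ε(t), β(t)) denote the central path. Then the curve t ↦ x̄(t) is differentiable at almost every t ≥ 0, and its derivative satisfies ‖(d/dt) x̄(t)‖ ≤ (β'(t)/ε(t)) ‖B(x̄(t))‖ + (|ε'(t)|/ε(t)) ‖x̄(t)‖ for almost every t ≥ 0. -/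
open Filter Topology MeasureTheory
open scoped RealInnerProductSpace

variable {H : Type*} [NormedAddCommGroup H] [InnerProductSpace ℝ H] [CompleteSpace H]

/-- `f` is (locally) absolutely continuous on `[0,∞)` with integrand (a.e. derivative) `g`. -/
def ACRep (f g : ℝ → ℝ) : Prop :=
  (∀ b : ℝ, 0 ≤ b → IntervalIntegrable g MeasureTheory.volume 0 b) ∧
  ∀ t : ℝ, 0 ≤ t → f t = f 0 + ∫ s in (0:ℝ)..t, g s

lemma ac_of_dist_le {X Y : Type*} [PseudoMetricSpace X] [PseudoMetricSpace Y] {f : ℝ → X} {g : ℝ → Y} {a b : ℝ}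
    (hg : AbsolutelyContinuousOnInterval g a b)
    (h : ∀ s ∈ Set.uIcc a b, ∀ t ∈ Set.uIcc a b, dist (f s) (f t) ≤ dist (g s) (g t)) :
    AbsolutelyContinuousOnInterval f a b := by
  rw [absolutelyContinuousOnInterval_iff] at hg ⊢
  intro e he
  obtain ⟨δ, hδ, H⟩ := hg e he
  refine ⟨δ, hδ, fun E hE hl => lt_of_le_of_lt (Finset.sum_le_sum fun i hi => ?_) (H E hE hl)⟩
  exact h _ (hE.1 i hi).1 _ (hE.1 i hi).2

lemma deriv_norm_le {x : ℝ → H} {G : ℝ → ℝ} {t : ℝ} {v : H} {g : ℝ}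
    (hx : HasDerivAt x v t) (hG : HasDerivAt G g t)
    (h : ∀ᶠ s in 𝓝 t, ‖x s - x t‖ ≤ |G s - G t|) : ‖v‖ ≤ |g| := by
  rw [hasDerivAt_iff_tendsto_slope] at hx hG
  refine le_of_tendsto_of_tendsto hx.norm hG.abs ?_
  filter_upwards [nhdsWithin_le_nhds h] with s hs
  simp only [slope, vsub_eq_sub, norm_smul, smul_eq_mul, abs_mul, Real.norm_eq_abs]
  gcongr

lemma cauchy_aux_s10 (V : ℕ → Submodule ℝ H) [∀ n, (V n).HasOrthogonalProjection]
    (u : ℕ → H) (hu : ∀ m n, m ≤ n → (V m).starProjection (u n) = u m)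
    (C : ℝ) (hC : ∀ n, ‖u n‖ ≤ C) : ∃ l, Tendsto u atTop (𝓝 l) := by
  have key : ∀ m n, m ≤ n → ‖u n - u m‖ ^ 2 = ‖u n‖ ^ 2 - ‖u m‖ ^ 2 := by
    intro m n hmn
    have h1 : ⟪u n - u m, u m⟫ = 0 := by
      have := (V m).starProjection_inner_eq_zero (u n) (u m) (by
        rw [← hu m n hmn]; exact Submodule.starProjection_apply_mem _ _)
      rwa [hu m n hmn] at this
    have h2 : u n = (u n - u m) + u m := by abel
    have h3 := norm_add_sq_real (u n - u m) (u m)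
    rw [h1, ← h2] at h3
    linarith
  have mono : Monotone fun n => ‖u n‖ ^ 2 := by
    intro m n hmn
    have := key m n hmn
    have := sq_nonneg ‖u n - u m‖
    simp only; linarith
  have bdd : BddAbove (Set.range fun n => ‖u n‖ ^ 2) := by
    refine ⟨C ^ 2, ?_⟩
    rintro _ ⟨n, rfl⟩
    exact pow_le_pow_left₀ (norm_nonneg _) (hC n) 2
  have hl := tendsto_atTop_ciSup mono bdd
  apply cauchySeq_tendsto_of_complete
  have hc := hl.cauchySeq
  rw [Metric.cauchySeq_iff'] at hc ⊢
  intro e he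
  obtain ⟨N, hN⟩ := hc (e ^ 2) (by positivity)
  refine ⟨N, fun n hn => ?_⟩
  have := hN n hn
  rw [Real.dist_eq, ← key N n hn, abs_of_nonneg (by positivity)] at this
  rw [dist_eq_norm]
  exact lt_of_pow_lt_pow_left₀ 2 he.le this

lemma ae_diff_of_dom (x : ℝ → H) (G : ℝ → ℝ) (a b : ℝ) (hab : a ≤ b)
    (hG : AbsolutelyContinuousOnInterval G a b)
    (h : ∀ s ∈ Set.uIcc a b, ∀ t ∈ Set.uIcc a b, ‖x s - x t‖ ≤ |G s - G t|) :
    ∀ᵐ t, t ∈ Set.Ioo a b → DifferentiableAt ℝ x t := by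
  have hdom : ∀ s ∈ Set.uIcc a b, ∀ t ∈ Set.uIcc a b, dist (x s) (x t) ≤ dist (G s) (G t) := by
    intro s hs t ht
    rw [dist_eq_norm, Real.dist_eq]; exact h s hs t ht
  have hx : AbsolutelyContinuousOnInterval x a b := ac_of_dist_le hG hdom
  have hcont := hx.continuousOn
  -- separability
  have hsep : TopologicalSpace.IsSeparable (x '' Set.uIcc a b) :=
    (isCompact_uIcc.image_of_continuousOn hcont).isSeparable
  obtain ⟨c, hc, hcl⟩ := hsep
  obtain ⟨d, hd⟩ : ∃ d : ℕ → H, c ⊆ Set.range d := by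
    rcases c.eq_empty_or_nonempty with rfl | hne
    · exact ⟨fun _ => 0, by simp⟩
    · obtain ⟨d, rfl⟩ := hc.exists_eq_range hne
      exact ⟨d, subset_rfl⟩
  let V : ℕ → Submodule ℝ H := fun n => Submodule.span ℝ (d '' Set.Iio n)
  have hVmono : Monotone V := fun m n hmn =>
    Submodule.span_mono (Set.image_mono (Set.Iio_subset_Iio hmn))
  have hfin : ∀ n, FiniteDimensional ℝ (V n) := fun n =>
    FiniteDimensional.span_of_finite ℝ ((Set.finite_Iio n).image d)
  let P : ℕ → H →L[ℝ] H := fun n => (V n).starProjection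
  have hPle : ∀ n y, ‖P n y‖ ≤ ‖y‖ := fun n y => Submodule.norm_starProjection_apply_le _ _
  have hPx : ∀ t ∈ Set.uIcc a b, Tendsto (fun n => P n (x t)) atTop (𝓝 (x t)) := by
    intro t ht
    have h1 := Submodule.starProjection_tendsto_closure_iSup V hVmono (x t)
    have h2 : x t ∈ (⨆ i, V i).topologicalClosure := by
      have : closure c ⊆ closure ((⨆ i, V i : Submodule ℝ H) : Set H) := by
        apply closure_mono
        intro y hy
        obtain ⟨n, rfl⟩ := hd hy
        exact (le_iSup V (n+1)) (Submodule.subset_span ⟨n, by simp, rfl⟩)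
      exact this (hcl ⟨t, ht, rfl⟩)
    rw [Submodule.starProjection_eq_self_iff.2 h2] at h1
    exact h1
  -- AC of projections
  have hPdom : ∀ n, ∀ s ∈ Set.uIcc a b, ∀ t ∈ Set.uIcc a b,
      ‖P n (x s) - P n (x t)‖ ≤ |G s - G t| := by
    intro n s hs t ht
    rw [← map_sub]
    exact (hPle n _).trans (h s hs t ht)
  let u : ℕ → ℝ → H := fun n => deriv (fun t => P n (x t))
  have hdiff : ∀ n, ∀ᵐ t, t ∈ Set.uIcc a b → HasDerivAt (fun t => P n (x t)) (u n t) t := by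
    intro n
    have hac : AbsolutelyContinuousOnInterval
        (fun t => (V n).orthogonalProjectionOnto (x t)) a b := by
      refine ac_of_dist_le hx fun s _ t _ => ?_
      rw [dist_eq_norm, dist_eq_norm, ← map_sub]
      exact hPle n (x s - x t)
    filter_upwards [hac.boundedVariationOn.ae_differentiableAt_of_mem_uIcc] with t ht hmem
    have h1 := ht hmem
    have h2 : DifferentiableAt ℝ (fun t => P n (x t)) t :=
      ((V n).subtypeL.differentiableAt).comp t h1
    exact h2.hasDerivAt
  have hGd := hG.ae_differentiableAt
  have hne : ∀ᵐ t : ℝ, t ≠ a ∧ t ≠ b := by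
    have h₁ : ∀ᵐ t : ℝ, t ≠ a := by simp [ae_iff, measure_singleton]
    have h₂ : ∀ᵐ t : ℝ, t ≠ b := by simp [ae_iff, measure_singleton]
    filter_upwards [h₁, h₂] with t p q using ⟨p, q⟩
  have hall := ae_all_iff.2 hdiff
  have hnb : ∀ t, t ∈ Set.uIcc a b → t ≠ a → t ≠ b → Set.uIcc a b ∈ 𝓝 t := by
    intro t ht h1 h2
    rw [Set.uIcc_of_le hab] at ht ⊢
    exact Icc_mem_nhds (lt_of_le_of_ne ht.1 h1.symm) (lt_of_le_of_ne ht.2 h2)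
  have hub : ∀ᵐ t, t ∈ Set.uIcc a b → ∀ n, ‖u n t‖ ≤ |deriv G t| := by
    filter_upwards [hGd, hne, hall] with t h1 h2 h3 ht n
    refine deriv_norm_le (h3 n ht) (h1 ht).hasDerivAt ?_
    filter_upwards [hnb t ht h2.1 h2.2] with s hs
    exact hPdom n s hs t ht
  have huproj : ∀ᵐ t, t ∈ Set.uIcc a b → ∀ m n, m ≤ n → P m (u n t) = u m t := by
    filter_upwards [hall] with t h3 ht m n hmn
    have h4 : HasDerivAt (fun t => P m (P n (x t))) (P m (u n t)) t :=
      ((P m).hasFDerivAt).comp_hasDerivAt t (h3 n ht)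
    have h5 : (fun t => P m (P n (x t))) = fun t => P m (x t) := by
      funext t
      exact DFunLike.congr_fun
        (Submodule.starProjection_comp_starProjection_of_le (hVmono hmn)) (x t)
    rw [h5] at h4
    exact h4.unique (h3 m ht)
  have hlim : ∀ᵐ t ∂(volume.restrict (Set.uIcc a b)), ∃ l, Tendsto (fun n => u n t) atTop (𝓝 l) := by
    rw [ae_restrict_iff' measurableSet_uIcc]
    filter_upwards [hub, huproj] with t h1 h2 ht
    exact cauchy_aux_s10 V (fun n => u n t) (h2 ht) _ (h1 ht)
  have hmeas : ∀ n, AEStronglyMeasurable (u n) (volume.restrict (Set.uIcc a b)) :=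
    fun n => aestronglyMeasurable_deriv _ _
  obtain ⟨v, hvm, hv⟩ := exists_stronglyMeasurable_limit_of_tendsto_ae hmeas hlim
  rw [ae_restrict_iff' measurableSet_uIcc] at hv
  have hvb : ∀ᵐ t, t ∈ Set.uIcc a b → ‖v t‖ ≤ |deriv G t| := by
    filter_upwards [hv, hub] with t h1 h2 ht
    exact le_of_tendsto (h1 ht).norm (Eventually.of_forall (h2 ht))
  have hGi := hG.intervalIntegrable_deriv.abs
  have hvi : IntervalIntegrable v volume a b := by
    refine hGi.mono_fun hvm.aestronglyMeasurable ?_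
    rw [EventuallyLE, ae_restrict_iff' measurableSet_uIoc]
    filter_upwards [hvb] with t ht hm
    simpa using ht (Set.uIoc_subset_uIcc hm)
  have hrep : ∀ t ∈ Set.uIcc a b, x t = x a + ∫ s in a..t, v s := by
    intro t ht
    have hsub : Set.uIcc a t ⊆ Set.uIcc a b := Set.uIcc_subset_uIcc Set.left_mem_uIcc ht
    have hsub' : Set.uIoc a t ⊆ Set.uIcc a b := Set.uIoc_subset_uIcc.trans hsub
    suffices hs : x t - x a = ∫ s in a..t, v s by rw [← hs]; abel
    refine ext_inner_left ℝ fun w => ?_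
    have hvi' : IntervalIntegrable v volume a t := hvi.mono_set hsub
    have e1 : ∫ s in a..t, ⟪w, v s⟫ = ⟪w, ∫ s in a..t, v s⟫ :=
      (innerSL ℝ w).intervalIntegral_comp_comm hvi'
    rw [← e1]
    have hn : ∀ n, ∫ s in a..t, ⟪w, u n s⟫ = ⟪w, P n (x t)⟫ - ⟪w, P n (x a)⟫ := by
      intro n
      have hac : AbsolutelyContinuousOnInterval (fun s => ⟪w, P n (x s)⟫) a t := by
        refine ac_of_dist_le ((hG.mono hsub).const_mul ‖w‖) fun p hp q hq => ?_
        rw [Real.dist_eq, Real.dist_eq, ← inner_sub_right, ← mul_sub, abs_mul, abs_norm]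
        exact (abs_real_inner_le_norm _ _).trans
          (mul_le_mul_of_nonneg_left (hPdom n p (hsub hp) q (hsub hq)) (norm_nonneg _))
      rw [← hac.integral_deriv_eq_sub]
      apply intervalIntegral.integral_congr_ae
      filter_upwards [hdiff n] with s h1 hs
      have h2 : HasDerivAt (fun s => ⟪w, P n (x s)⟫) ⟪w, u n s⟫ s :=
        ((innerSL ℝ w).hasFDerivAt).comp_hasDerivAt s (h1 (hsub' hs))
      exact h2.deriv.symm
    have t1 : Tendsto (fun n => ∫ s in a..t, ⟪w, u n s⟫) atTop (𝓝 (∫ s in a..t, ⟪w, v s⟫)) := by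
      refine intervalIntegral.tendsto_integral_filter_of_dominated_convergence
        (fun s => ‖w‖ * |deriv G s|) ?_ ?_ ?_ ?_
      · refine Eventually.of_forall fun n => ?_
        exact (innerSL ℝ w).continuous.comp_aestronglyMeasurable (aestronglyMeasurable_deriv _ _)
      · refine Eventually.of_forall fun n => ?_
        filter_upwards [hub] with s h1 hs
        exact (norm_inner_le_norm _ _).trans
          (mul_le_mul_of_nonneg_left (h1 (hsub' hs) n) (norm_nonneg _))
      · exact (hGi.mono_set hsub).const_mul _
      · filter_upwards [hv] with s h1 hs
        exact ((innerSL ℝ w).continuous.tendsto _).comp (h1 (hsub' hs))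
    have t2 : Tendsto (fun n => ∫ s in a..t, ⟪w, u n s⟫) atTop (𝓝 ⟪w, x t - x a⟫) := by
      simp only [hn, inner_sub_right]
      exact (((innerSL ℝ w).continuous.tendsto _).comp (hPx t ht)).sub
        (((innerSL ℝ w).continuous.tendsto _).comp (hPx a Set.left_mem_uIcc))
    exact tendsto_nhds_unique t2 t1
  filter_upwards [hvi.ae_hasDerivAt_integral] with t h1 ht
  have htm : t ∈ Set.uIcc a b := by
    rw [Set.uIcc_of_le hab]; exact Set.Ioo_subset_Icc_self ht
  have h2 := (h1 htm a Set.left_mem_uIcc).const_add (x a)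
  refine (h2.congr_of_eventuallyEq ?_).differentiableAt
  filter_upwards [hnb t htm ht.1.ne' ht.2.ne] with s hs
  exact hrep s hs

lemma acrep_ac {f g : ℝ → ℝ} (h : ACRep f g) {b : ℝ} (hb : 0 ≤ b) :
    AbsolutelyContinuousOnInterval f 0 b := by
  refine ac_of_dist_le ((h.1 b hb).absolutelyContinuousOnInterval_intervalIntegral
    (c := 0) Set.left_mem_uIcc) fun s hs t ht => ?_
  rw [Set.uIcc_of_le hb] at hs ht
  rw [h.2 s hs.1, h.2 t ht.1, dist_add_left]

lemma acrep_deriv {f g : ℝ → ℝ} (h : ACRep f g) :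
    ∀ᵐ t : ℝ, 0 < t → HasDerivAt f (g t) t := by
  have h1 : ∀ N : ℕ, ∀ᵐ t : ℝ, t ∈ Set.uIcc (0:ℝ) N → ∀ c ∈ Set.uIcc (0:ℝ) N,
      HasDerivAt (fun x => ∫ s in c..x, g s) (g t) t :=
    fun N => (h.1 N (Nat.cast_nonneg N)).ae_hasDerivAt_integral
  filter_upwards [ae_all_iff.2 h1] with t ht h0
  obtain ⟨N, hN⟩ := exists_nat_ge t
  have h2 := (ht N (by rw [Set.uIcc_of_le (Nat.cast_nonneg N)]; exact ⟨h0.le, hN⟩) 0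
    Set.left_mem_uIcc).const_add (f 0)
  refine h2.congr_of_eventuallyEq ?_
  filter_upwards [lt_mem_nhds h0] with s hs
  exact h.2 s hs.le

lemma coco_lip {B : H → H} {μ : ℝ} (hμ : 0 < μ)
    (hB : ∀ x y : H, μ * ‖B x - B y‖^2 ≤ ⟪B x - B y, x - y⟫) (x y : H) :
    ‖B x - B y‖ ≤ μ⁻¹ * ‖x - y‖ := by
  have h1 := (hB x y).trans (real_inner_le_norm _ _)
  rcases (norm_nonneg (B x - B y)).eq_or_lt with h0 | h0
  · rw [← h0]; positivity
  · rw [inv_mul_eq_div, le_div_iff₀ hμ]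
    have : (‖B x - B y‖ * μ) * ‖B x - B y‖ ≤ ‖x - y‖ * ‖B x - B y‖ := by nlinarith
    exact le_of_mul_le_mul_right this h0

lemma path_est {A : H → Set H} {D B : H → H} (hA : MonoSV A)
    (hD : ∀ x y : H, (0:ℝ) ≤ ⟪D x - D y, x - y⟫)
    (hB : ∀ x y : H, (0:ℝ) ≤ ⟪B x - B y, x - y⟫)
    {x y : H} {e₁ b₁ e₂ b₂ : ℝ} (hb : 0 ≤ b₂)
    (hx : ∃ a ∈ A x, a + D x + e₁ • x + b₁ • B x = 0)
    (hy : ∃ a ∈ A y, a + D y + e₂ • y + b₂ • B y = 0) :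
    e₂ * ‖x - y‖ ≤ |b₁ - b₂| * ‖B x‖ + |e₁ - e₂| * ‖x‖ := by
  obtain ⟨p, hp, hp0⟩ := hx
  obtain ⟨q, hq, hq0⟩ := hy
  have h1 := hA hp hq
  have h2 := hD x y
  have h3 := mul_nonneg hb (hB x y)
  have hid : e₂ • (x - y) = -(p - q) - (D x - D y) - b₂ • (B x - B y)
      - (b₁ - b₂) • B x - (e₁ - e₂) • x := by
    have : (p + D x + e₁ • x + b₁ • B x) - (q + D y + e₂ • y + b₂ • B y) = 0 := by
      rw [hp0, hq0, sub_zero]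
    rw [← sub_eq_zero, ← this]
    module
  have hin := congrArg (fun z => ⟪z, x - y⟫) hid
  simp only [inner_sub_left (𝕜 := ℝ) _ _ (x - y), inner_neg_left, real_inner_smul_left] at hin
  have hin2 : e₂ * ‖x - y‖ ^ 2 = - ⟪p - q, x - y⟫ - ⟪D x - D y, x - y⟫
      - b₂ * ⟪B x - B y, x - y⟫ - (b₁ - b₂) * ⟪B x, x - y⟫ - (e₁ - e₂) * ⟪x, x - y⟫ := by
    rw [← real_inner_self_eq_norm_sq, inner_sub_left (𝕜 := ℝ) x y (x - y),
      inner_sub_left (𝕜 := ℝ) p, inner_sub_left (𝕜 := ℝ) (D x), inner_sub_left (𝕜 := ℝ) (B x)]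
    linarith
  have h4 : -((b₁ - b₂) * ⟪B x, x - y⟫) ≤ |b₁ - b₂| * (‖B x‖ * ‖x - y‖) := by
    refine (neg_le_abs _).trans ?_
    rw [abs_mul]
    exact mul_le_mul_of_nonneg_left (abs_real_inner_le_norm _ _) (abs_nonneg _)
  have h5 : -((e₁ - e₂) * ⟪x, x - y⟫) ≤ |e₁ - e₂| * (‖x‖ * ‖x - y‖) := by
    refine (neg_le_abs _).trans ?_
    rw [abs_mul]
    exact mul_le_mul_of_nonneg_left (abs_real_inner_le_norm _ _) (abs_nonneg _)
  rcases (norm_nonneg (x - y)).eq_or_lt with h0 | h0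
  · rw [← h0, mul_zero]; positivity
  · refine le_of_mul_le_mul_right ?_ h0
    nlinarith

/-- the central path `t ↦ x̄(ε(t), β(t))` is differentiable almost
everywhere on `[0,∞)`, with `‖(d/dt)x̄(t)‖ ≤ (β'(t)/ε(t))‖B(x̄(t))‖ + (|ε'(t)|/ε(t))‖x̄(t)‖`
for almost every `t ≥ 0`. -/
theorem central_path_ae_differentiable
    (A : H → Set H) (D B : H → H) (η μ : ℝ) (hη : 0 < η) (hμ : 0 < μ)
    (hAmax : MaxMonoSV A)
    (hDmono : ∀ x y : H, (0:ℝ) ≤ ⟪D x - D y, x - y⟫)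
    (hDlip : ∀ x y : H, ‖D x - D y‖ ≤ (1/η) * ‖x - y‖)
    (hBcoco : ∀ x y : H, μ * ‖B x - B y‖^2 ≤ ⟪B x - B y, x - y⟫)
    (xbar : ℝ → ℝ → H)
    (hxbar : ∀ ε β : ℝ, 0 < ε → 0 < β →
      (∃ a ∈ A (xbar ε β), a + D (xbar ε β) + ε • xbar ε β + β • B (xbar ε β) = 0) ∧
      (∀ z : H, (∃ a ∈ A z, a + D z + ε • z + β • B z = 0) → z = xbar ε β))
    (ε β ε' β' : ℝ → ℝ)
    (hεpos : ∀ t : ℝ, 0 ≤ t → 0 < ε t) (hβpos : ∀ t : ℝ, 0 ≤ t → 0 < β t)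
    (hεAC : ACRep ε ε') (hβAC : ACRep β β')
    (hεanti : ∀ s t : ℝ, 0 ≤ s → s ≤ t → ε t ≤ ε s)
    (hβmono : ∀ s t : ℝ, 0 ≤ s → s ≤ t → β s ≤ β t)
    (hε0 : Tendsto ε atTop (nhds 0)) (hβinf : Tendsto β atTop atTop)
    (hεβ : Tendsto (fun t => ε t * β t) atTop atTop) :
    ∃ v : ℝ → H, ∀ᵐ t ∂(MeasureTheory.volume.restrict (Set.Ici (0:ℝ))),
      HasDerivAt (fun s => xbar (ε s) (β s)) (v t) t ∧
      ‖v t‖ ≤ (β' t / ε t) * ‖B (xbar (ε t) (β t))‖ + (|ε' t| / ε t) * ‖xbar (ε t) (β t)‖ := by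
  have hBm : ∀ x y : H, (0:ℝ) ≤ ⟪B x - B y, x - y⟫ := fun x y =>
    le_trans (by positivity) (hBcoco x y)
  have hBl := coco_lip hμ hBcoco
  set x : ℝ → H := fun s => xbar (ε s) (β s) with hxdef
  have hzero : ∀ t, 0 ≤ t → ∃ a ∈ A (x t), a + D (x t) + ε t • x t + β t • B (x t) = 0 :=
    fun t ht => (hxbar (ε t) (β t) (hεpos t ht) (hβpos t ht)).1
  have hest : ∀ s t, 0 ≤ s → 0 ≤ t →
      ε t * ‖x s - x t‖ ≤ |β s - β t| * ‖B (x s)‖ + |ε s - ε t| * ‖x s‖ :=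
    fun s t hs ht => path_est hAmax.1 hDmono hBm (hβpos t ht).le (hzero s hs) (hzero t ht)
  have hdiffN : ∀ N : ℕ, ∀ᵐ t : ℝ, t ∈ Set.Ioo (0:ℝ) N → DifferentiableAt ℝ x t := by
    intro N
    have hN : (0:ℝ) ≤ N := Nat.cast_nonneg N
    have eN := hεpos N hN
    -- uniform bounds
    let R : ℝ := ((β N - β 0) * ‖B (x 0)‖ + (ε 0 - ε N) * ‖x 0‖) / ε N
    have hR : ∀ s : ℝ, 0 ≤ s → s ≤ N → ‖x 0 - x s‖ ≤ R := by
      intro s hs hsN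
      rw [le_div_iff₀ eN]
      have h1 := hest 0 s le_rfl hs
      have b1 := hβmono 0 s le_rfl hs
      have b2 := hβmono s N hs hsN
      have e1 := hεanti 0 s le_rfl hs
      have e2 := hεanti s N hs hsN
      rw [abs_of_nonpos (by linarith), abs_of_nonneg (by linarith)] at h1
      calc ‖x 0 - x s‖ * ε N ≤ ‖x 0 - x s‖ * ε s := by gcongr
        _ ≤ -(β 0 - β s) * ‖B (x 0)‖ + (ε 0 - ε s) * ‖x 0‖ := by linarith
        _ ≤ _ := by gcongr; linarith
    let K : ℝ := (‖x 0‖ + R + (‖B (x 0)‖ + μ⁻¹ * R)) / ε N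
    have hxs : ∀ s : ℝ, 0 ≤ s → s ≤ N → ‖x s‖ ≤ ‖x 0‖ + R := by
      intro s hs hsN
      have := hR s hs hsN
      have := norm_le_norm_add_norm_sub (x 0) (x s)
      linarith
    have hBs : ∀ s : ℝ, 0 ≤ s → s ≤ N → ‖B (x s)‖ ≤ ‖B (x 0)‖ + μ⁻¹ * R := by
      intro s hs hsN
      have h1 := hR s hs hsN
      have h2 := hBl (x 0) (x s)
      have h3 : μ⁻¹ * ‖x 0 - x s‖ ≤ μ⁻¹ * R := by gcongr
      have := norm_le_norm_add_norm_sub (B (x 0)) (B (x s))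
      linarith
    have hR0 : 0 ≤ R := (norm_nonneg _).trans (hR 0 le_rfl hN)
    have hK0 : 0 ≤ K := by positivity
    have hGac : AbsolutelyContinuousOnInterval (fun t => K * (β t - ε t)) 0 N :=
      ((acrep_ac hβAC hN).sub (acrep_ac hεAC hN)).const_mul K
    refine ae_diff_of_dom x (fun t => K * (β t - ε t)) 0 N hN hGac ?_
    have main : ∀ s t : ℝ, 0 ≤ s → s ≤ t → t ≤ N →
        ‖x s - x t‖ ≤ |K * (β s - ε s) - K * (β t - ε t)| := by
      intro s t hs hst htN
      have ht := hs.trans hst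
      have b1 := hβmono s t hs hst
      have e1 := hεanti s t hs hst
      have e2 := hεanti t N ht htN
      have h1 := hest s t hs ht
      rw [abs_of_nonpos (by linarith), abs_of_nonneg (by linarith)] at h1
      have h2 := hxs s hs (hst.trans htN)
      have h3 := hBs s hs (hst.trans htN)
      rw [← mul_sub, abs_mul, abs_of_nonneg hK0, abs_of_nonpos (by linarith)]
      have : ‖x s - x t‖ * ε N ≤ (‖x 0‖ + R + (‖B (x 0)‖ + μ⁻¹ * R)) *
          -(β s - ε s - (β t - ε t)) := by
        have p1 : ‖x s - x t‖ * ε N ≤ ‖x s - x t‖ * ε t := by gcongr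
        have p2 : -(β s - β t) * ‖B (x s)‖ ≤ -(β s - β t) * (‖B (x 0)‖ + μ⁻¹ * R) :=
          mul_le_mul_of_nonneg_left h3 (by linarith)
        have p3 : (ε s - ε t) * ‖x s‖ ≤ (ε s - ε t) * (‖x 0‖ + R) :=
          mul_le_mul_of_nonneg_left h2 (by linarith)
        have p4 : 0 ≤ (ε s - ε t) * (‖B (x 0)‖ + μ⁻¹ * R) :=
          mul_nonneg (by linarith) (by positivity)
        have p5 : 0 ≤ -(β s - β t) * (‖x 0‖ + R) :=
          mul_nonneg (by linarith) (by positivity)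
        linarith
      change _ ≤ (‖x 0‖ + R + (‖B (x 0)‖ + μ⁻¹ * R)) / ε N * _
      rw [div_mul_eq_mul_div, le_div_iff₀ eN]
      exact this
    intro s hs t ht
    rw [Set.uIcc_of_le hN] at hs ht
    rcases le_total s t with hst | hst
    · exact main s t hs.1 hst ht.2
    · rw [norm_sub_rev, abs_sub_comm]
      exact main t s ht.1 hst hs.2
  refine ⟨deriv x, ?_⟩
  rw [ae_restrict_iff' measurableSet_Ici]
  have hne : ∀ᵐ t : ℝ, t ≠ 0 := by simp [ae_iff, measure_singleton]
  filter_upwards [ae_all_iff.2 hdiffN, acrep_deriv hεAC, acrep_deriv hβAC, hne]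
    with t h1 h2 h3 h4 ht
  have ht0 : 0 < t := lt_of_le_of_ne ht (Ne.symm h4)
  obtain ⟨N, hN⟩ := exists_nat_gt t
  have hd := (h1 N ⟨ht0, hN⟩).hasDerivAt
  refine ⟨hd, ?_⟩
  have he := h2 ht0
  have hb := h3 ht0
  have hxc : ContinuousAt x t := hd.continuousAt
  have hBc : Continuous B := by
    have : LipschitzWith (Real.toNNReal μ⁻¹) B := LipschitzWith.of_dist_le_mul fun p q => by
      rw [dist_eq_norm, dist_eq_norm, Real.coe_toNNReal _ (by positivity)]
      exact hBl p q
    exact this.continuous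
  have hβ0 : 0 ≤ β' t := by
    rw [hasDerivAt_iff_tendsto_slope] at hb
    refine ge_of_tendsto hb ?_
    filter_upwards [nhdsWithin_le_nhds (lt_mem_nhds ht0)] with s hs
    simp only [slope, vsub_eq_sub, smul_eq_mul]
    rcases le_total s t with hst | hst
    · exact mul_nonneg_of_nonpos_of_nonpos (inv_nonpos.2 (by linarith))
        (by linarith [hβmono s t hs.le hst])
    · exact mul_nonneg (inv_nonneg.2 (by linarith)) (by linarith [hβmono t s ht hst])
  have hfin : ε t * ‖deriv x t‖ ≤ |β' t| * ‖B (x t)‖ + |ε' t| * ‖x t‖ := by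
    rw [hasDerivAt_iff_tendsto_slope] at hd he hb
    have c1 : Tendsto (fun s => ‖B (x s)‖) (𝓝[≠] t) (𝓝 ‖B (x t)‖) :=
      ((hBc.continuousAt.comp hxc).norm.tendsto).mono_left nhdsWithin_le_nhds
    have c2 : Tendsto (fun s => ‖x s‖) (𝓝[≠] t) (𝓝 ‖x t‖) :=
      (hxc.norm.tendsto).mono_left nhdsWithin_le_nhds
    refine le_of_tendsto_of_tendsto (hd.norm.const_mul (ε t))
      ((hb.abs.mul c1).add (he.abs.mul c2)) ?_
    filter_upwards [nhdsWithin_le_nhds (lt_mem_nhds ht0)] with s hs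
    simp only [slope, vsub_eq_sub, norm_smul, smul_eq_mul, abs_mul, Real.norm_eq_abs]
    have := mul_le_mul_of_nonneg_left (hest s t hs.le ht) (abs_nonneg (s - t)⁻¹)
    linarith
  have et := hεpos t ht
  rw [abs_of_nonneg hβ0] at hfin
  change ‖deriv x t‖ ≤ (β' t / ε t) * ‖B (x t)‖ + (|ε' t| / ε t) * ‖x t‖
  rw [div_mul_eq_mul_div, div_mul_eq_mul_div, ← add_div, le_div_iff₀ et]
  linarith
end

section
/- Let H be a real Hilbert space, D : H → H η-cocoercive (η > 0) and B : H → H μ-cocoercive (μ > 0). Fix ε > 0, β > 0 and λ > 0 satisfying λ ≤ η(1 − λε) (equivalently λ ≤ η/(1 + ηε)) and λβ ≤ μ(1 − λε), and set V(x) := D x + ε x + β B x. Then for all x, y ∈ H, ‖(x − λ V(x)) − (y − λ V(y))‖ ≤ (1 − λε) ‖x − y‖. -/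
open scoped RealInnerProductSpace

theorem half_step_aux {H : Type*} [NormedAddCommGroup H] [InnerProductSpace ℝ H]
    (d u : H) (m c t : ℝ) (hc : 0 < c) (ht : 0 < t) (htm : t ≤ m * c)
    (h : m * ‖d‖^2 ≤ ⟪d, u⟫) : ‖(c / 2) • u - t • d‖ ≤ c / 2 * ‖u‖ := by
  refine (pow_le_pow_iff_left₀ (norm_nonneg _) (by positivity) two_ne_zero).1 ?_
  rw [norm_sub_sq_real, norm_smul, norm_smul, real_inner_smul_left, real_inner_smul_right,
    real_inner_comm, mul_pow, mul_pow, Real.norm_eq_abs, Real.norm_eq_abs, sq_abs, sq_abs]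
  have h1 : t * t * ‖d‖^2 ≤ t * (m * c) * ‖d‖^2 := by gcongr
  have h2 : (t * c) * (m * ‖d‖^2) ≤ (t * c) * ⟪d, u⟫ := by gcongr
  nlinarith

/-- the forward map `x ↦ x − λV(x)`, `V = D + ε·Id + β·B`, is a
`(1 − λε)`-contraction under the step-size restrictions `λ ≤ η(1 − λε)` and
`λβ ≤ μ(1 − λε)`, for `D` `η`-cocoercive and `B` `μ`-cocoercive. -/
theorem forward_step_contraction
    {H : Type*} [NormedAddCommGroup H] [InnerProductSpace ℝ H]
    (D B : H → H) (η μ : ℝ) (hη : 0 < η) (hμ : 0 < μ)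
    (hDcoco : ∀ x y : H, η * ‖D x - D y‖^2 ≤ ⟪D x - D y, x - y⟫)
    (hBcoco : ∀ x y : H, μ * ‖B x - B y‖^2 ≤ ⟪B x - B y, x - y⟫)
    (ε β lam : ℝ) (hε : 0 < ε) (hβ : 0 < β) (hlam : 0 < lam)
    (hlam1 : lam ≤ η * (1 - lam * ε)) (hlam2 : lam * β ≤ μ * (1 - lam * ε)) :
    ∀ x y : H,
      ‖(x - lam • (D x + ε • x + β • B x)) - (y - lam • (D y + ε • y + β • B y))‖ ≤
        (1 - lam * ε) * ‖x - y‖ := by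
  intro x y
  have hc : 0 < 1 - lam * ε := by
    by_contra hcon
    have := mul_nonpos_of_nonneg_of_nonpos hη.le (not_lt.1 hcon)
    linarith
  have h1 := half_step_aux _ _ η _ lam hc hlam hlam1 (hDcoco x y)
  have h2 := half_step_aux _ _ μ _ (lam * β) hc (by positivity) hlam2 (hBcoco x y)
  have e : (x - lam • (D x + ε • x + β • B x)) - (y - lam • (D y + ε • y + β • B y)) =
      (((1 - lam * ε) / 2) • (x - y) - lam • (D x - D y)) +
      (((1 - lam * ε) / 2) • (x - y) - (lam * β) • (B x - B y)) := by
    module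
  rw [e]
  refine (norm_add_le _ _).trans ?_
  linarith
end

section
/- Let H be a real Hilbert space, A : H → Set H monotone, D : H → H η-cocoercive (η > 0), B : H → H μ-cocoercive (μ > 0). Fix γ > 0, ε > 0, β > 0 and λ > 0 with λ ≤ η/(1 + ηε) and λ ≤ μ/(με + β), and set V(x) := D x + ε x + β B x. Let x̄ ∈ H satisfy −V(x̄) ∈ A(x̄), let x ∈ H, let p ∈ H satisfy p + λ a = x − λ V(x) for some a ∈ A(p), and set v := γ(p − x). Then 2⟪v, x − x̄⟫ ≤ γ λ ε (λε − 2) ‖x − x̄‖². -/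
open scoped RealInnerProductSpace

/-- the key descent inequality for the forward-backward dynamics:
`2⟪γ(p − x), x − x̄⟫ ≤ γλε(λε − 2)‖x − x̄‖²`. -/
theorem FB_descent_inequality
    {H : Type*} [NormedAddCommGroup H] [InnerProductSpace ℝ H]
    (A : H → Set H) (D B : H → H) (η μ : ℝ) (hη : 0 < η) (hμ : 0 < μ)
    (hAmono : ∀ ⦃x y u v : H⦄, u ∈ A x → v ∈ A y → (0:ℝ) ≤ ⟪u - v, x - y⟫)
    (hDcoco : ∀ x y : H, η * ‖D x - D y‖^2 ≤ ⟪D x - D y, x - y⟫)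
    (hBcoco : ∀ x y : H, μ * ‖B x - B y‖^2 ≤ ⟪B x - B y, x - y⟫)
    (γ ε β lam : ℝ) (hγ : 0 < γ) (hε : 0 < ε) (hβ : 0 < β) (hlam : 0 < lam)
    (hlam1 : lam ≤ η / (1 + η * ε)) (hlam2 : lam ≤ μ / (μ * ε + β))
    (xbar : H) (hxbar : -(D xbar + ε • xbar + β • B xbar) ∈ A xbar)
    (x p a : H) (ha : a ∈ A p)
    (hp : p + lam • a = x - lam • (D x + ε • x + β • B x)) :
    2 * ⟪γ • (p - x), x - xbar⟫ ≤ γ * lam * ε * (lam * ε - 2) * ‖x - xbar‖^2 := by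
  have h1 : lam ≤ (1 - lam * ε) * η := by
    rw [le_div_iff₀ (by positivity)] at hlam1; linarith
  have h2 : lam * β ≤ (1 - lam * ε) * μ := by
    rw [le_div_iff₀ (by positivity)] at hlam2; linarith
  have hs : 0 ≤ 1 - lam * ε := by
    by_contra hneg
    push Not at hneg
    nlinarith [mul_pos (neg_pos.mpr hneg) hη]
  have hmono := hAmono ha hxbar
  have hD := hDcoco x xbar
  have hB := hBcoco x xbar
  obtain ⟨e, he⟩ : ∃ e, e = x - xbar := ⟨_, rfl⟩
  obtain ⟨q, hq⟩ : ∃ q, q = p - xbar := ⟨_, rfl⟩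
  obtain ⟨d, hd⟩ : ∃ d, d = D x - D xbar := ⟨_, rfl⟩
  obtain ⟨b, hb⟩ : ∃ b, b = B x - B xbar := ⟨_, rfl⟩
  obtain ⟨w, hw⟩ : ∃ w, w = (1 - lam * ε) • e - lam • (d + β • b) := ⟨_, rfl⟩
  have key : lam • (a - -(D xbar + ε • xbar + β • B xbar)) = w - q := by
    have : lam • a = x - lam • (D x + ε • x + β • B x) - p := by rw [← hp]; abel
    rw [smul_sub, this, hw, he, hq, hd, hb]
    module
  have hpx : p - x = q - e := by rw [hq, he]; abel
  rw [hpx, ← he]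
  rw [← hd, ← he] at hD
  rw [← hb, ← he] at hB
  rw [← hq] at hmono
  have hm : 0 ≤ ⟪w - q, q⟫ := by
    rw [← key, real_inner_smul_left]; positivity
  have hwq : ‖q‖ ^ 2 ≤ ‖w‖ ^ 2 := by
    rw [inner_sub_left, real_inner_self_eq_norm_sq] at hm
    have := norm_sub_sq_real w q
    nlinarith [sq_nonneg ‖w - q‖]
  have hwe : ‖w‖ ^ 2 ≤ (1 - lam * ε) ^ 2 * ‖e‖ ^ 2 := by
    have e1 : ‖w‖ ^ 2 = (1 - lam * ε) ^ 2 * ‖e‖ ^ 2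
        - 2 * (1 - lam * ε) * lam * (⟪d, e⟫ + β * ⟪b, e⟫) + lam ^ 2 * ‖d + β • b‖ ^ 2 := by
      rw [hw, norm_sub_sq_real, norm_smul, norm_smul, mul_pow, mul_pow, real_inner_smul_left,
        real_inner_smul_right, inner_add_right, real_inner_smul_right, Real.norm_eq_abs,
        Real.norm_eq_abs, sq_abs, sq_abs, real_inner_comm e d, real_inner_comm e b]
      ring
    have e2 : ‖d + β • b‖ ^ 2 ≤ 2 * ‖d‖ ^ 2 + 2 * β ^ 2 * ‖b‖ ^ 2 := by
      have h3 := norm_add_sq_real d (β • b)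
      have h4 := norm_sub_sq_real d (β • b)
      have h5 : ‖β • b‖ ^ 2 = β ^ 2 * ‖b‖ ^ 2 := by
        rw [norm_smul, mul_pow, Real.norm_eq_abs, sq_abs]
      nlinarith [sq_nonneg ‖d - β • b‖]
    have e3 : lam ^ 2 * ‖d + β • b‖ ^ 2 ≤ lam ^ 2 * (2 * ‖d‖ ^ 2 + 2 * β ^ 2 * ‖b‖ ^ 2) := by
      gcongr
    have e4 := mul_le_mul_of_nonneg_left hD (mul_nonneg hs hlam.le)
    have e5 := mul_le_mul_of_nonneg_left hB (mul_nonneg (mul_nonneg hs hlam.le) hβ.le)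
    have e6 := mul_le_mul_of_nonneg_right h1 (mul_nonneg hlam.le (sq_nonneg ‖d‖))
    have e7 := mul_le_mul_of_nonneg_right h2
      (mul_nonneg (mul_nonneg hlam.le hβ.le) (sq_nonneg ‖b‖))
    linarith
  have hqe : 2 * ⟪q, e⟫ ≤ ‖q‖ ^ 2 + ‖e‖ ^ 2 := by
    have := norm_sub_sq_real q e
    nlinarith [sq_nonneg ‖q - e‖]
  rw [real_inner_smul_left, inner_sub_left, real_inner_self_eq_norm_sq]
  have hfin : 2 * (⟪q, e⟫ - ‖e‖ ^ 2) ≤ lam * ε * (lam * ε - 2) * ‖e‖ ^ 2 := by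
    linarith
  have := mul_le_mul_of_nonneg_left hfin hγ.le
  linarith
end

section
/- Let H be a real Hilbert space, A : H → Set H monotone, and let V : H → H be ε-strongly monotone for some ε > 0. Let λ > 0, let x̄ ∈ H satisfy −V(x̄) ∈ A(x̄), let x ∈ H, and let p ∈ H satisfy p + λ a = x − λ V(x) for some a ∈ A(p). Then 0 ≤ −‖x − p‖² + ‖x − x̄‖² − (1 + 2λε)‖p − x̄‖² + 2λ ⟪V(p) − V(x), p − x̄⟫. -/
open scoped RealInnerProductSpace

/-- basic inequality for the forward-backward-forward dynamics
(Lemma 3.7 of the paper). -/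
theorem FBF_basic_inequality
    {H : Type*} [NormedAddCommGroup H] [InnerProductSpace ℝ H]
    (A : H → Set H) (V : H → H) (ε : ℝ) (hε : 0 < ε)
    (hAmono : ∀ ⦃x y u v : H⦄, u ∈ A x → v ∈ A y → (0:ℝ) ≤ ⟪u - v, x - y⟫)
    (hVsm : ∀ x y : H, ε * ‖x - y‖^2 ≤ ⟪V x - V y, x - y⟫)
    (lam : ℝ) (hlam : 0 < lam)
    (xbar : H) (hxbar : -V xbar ∈ A xbar)
    (x p a : H) (ha : a ∈ A p) (hp : p + lam • a = x - lam • V x) :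
    0 ≤ -‖x - p‖^2 + ‖x - xbar‖^2 - (1 + 2 * lam * ε) * ‖p - xbar‖^2
        + 2 * lam * ⟪V p - V x, p - xbar⟫ := by
  have h1 := hAmono ha hxbar
  have h2 := hVsm p xbar
  have h3 : x - p = lam • a + lam • V x := by
    have h : x = p + lam • a + lam • V x := by rw [hp]; abel
    rw [sub_eq_iff_eq_add]
    rw [add_assoc, add_comm] at h
    exact h
  have h4 : ⟪x - p, p - xbar⟫ = lam * ⟪a, p - xbar⟫ + lam * ⟪V x, p - xbar⟫ := by
    rw [h3, inner_add_left, real_inner_smul_left, real_inner_smul_left]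
  have h5 : ‖x - xbar‖^2 = ‖x - p‖^2 + 2 * ⟪x - p, p - xbar⟫ + ‖p - xbar‖^2 := by
    rw [← norm_add_sq_real, sub_add_sub_cancel]
  rw [sub_neg_eq_add, inner_add_left] at h1
  rw [inner_sub_left] at h2
  rw [h5, h4, inner_sub_left]
  have h6 : 0 ≤ lam * (⟪a, p - xbar⟫ + ⟪V p, p - xbar⟫ - ε * ‖p - xbar‖^2) :=
    mul_nonneg hlam.le (by linarith)
  linarith
end

section
/- Let H be a real Hilbert space, A : H → Set H monotone, and let V : H → H be ε-strongly monotone (ε > 0) and L-Lipschitz continuous. Let λ > 0, let x̄ ∈ H satisfy −V(x̄) ∈ A(x̄), let x ∈ H, let p ∈ H satisfy p + λ a = x − λ V(x) for some a ∈ A(p), and set v := p − x + λ(V(x) − V(p)). Then ⟪x − x̄, v⟫ ≤ (λL − 1)‖x − p‖² − λε‖p − x̄‖². -/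
open scoped RealInnerProductSpace

/-- descent inequality for the forward-backward-forward vector field
(Lemma 3.8 of the paper). -/
theorem FBF_descent_inequality
    {H : Type*} [NormedAddCommGroup H] [InnerProductSpace ℝ H]
    (A : H → Set H) (V : H → H) (ε L : ℝ) (hε : 0 < ε)
    (hAmono : ∀ ⦃x y u v : H⦄, u ∈ A x → v ∈ A y → (0:ℝ) ≤ ⟪u - v, x - y⟫)
    (hVsm : ∀ x y : H, ε * ‖x - y‖^2 ≤ ⟪V x - V y, x - y⟫)
    (hVlip : ∀ x y : H, ‖V x - V y‖ ≤ L * ‖x - y‖)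
    (lam : ℝ) (hlam : 0 < lam)
    (xbar : H) (hxbar : -V xbar ∈ A xbar)
    (x p a : H) (ha : a ∈ A p) (hp : p + lam • a = x - lam • V x) :
    ⟪x - xbar, p - x + lam • (V x - V p)⟫ ≤
      (lam * L - 1) * ‖x - p‖^2 - lam * ε * ‖p - xbar‖^2 := by
  have h1 := hAmono ha hxbar
  have h2 := hVsm p xbar
  have h3 : ⟪x - p, V x - V p⟫ ≤ L * ‖x - p‖ ^ 2 := by
    have h4 := real_inner_le_norm (x - p) (V x - V p)
    have h5 := mul_le_mul_of_nonneg_left (hVlip x p) (norm_nonneg (x - p))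
    nlinarith
  have hv : p - x + lam • (V x - V p) = -(lam • ((a - -V xbar) + (V p - V xbar))) := by
    have h6 : p = x - lam • V x - lam • a := eq_sub_of_add_eq hp
    have h7 : p - x = - (lam • V x) - lam • a := by
      rw [sub_eq_iff_eq_add]
      refine h6.trans ?_
      abel
    rw [h7]
    module
  have e1 : ⟪x - xbar, p - x + lam • (V x - V p)⟫ =
      ⟪x - p, p - x + lam • (V x - V p)⟫ + ⟪p - xbar, p - x + lam • (V x - V p)⟫ := by
    rw [← inner_add_left, sub_add_sub_cancel]
  have e2 : ⟪x - p, p - x + lam • (V x - V p)⟫ =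
      -‖x - p‖ ^ 2 + lam * ⟪x - p, V x - V p⟫ := by
    rw [inner_add_right, inner_smul_right, ← neg_sub x p, inner_neg_right,
      real_inner_self_eq_norm_sq]
  have e3 : ⟪p - xbar, p - x + lam • (V x - V p)⟫ =
      -(lam * (⟪a - -V xbar, p - xbar⟫ + ⟪V p - V xbar, p - xbar⟫)) := by
    rw [hv, inner_neg_right, inner_smul_right, inner_add_right,
      real_inner_comm (a - -V xbar), real_inner_comm (V p - V xbar)]
  rw [e1, e2, e3]
  have m1 := mul_nonneg hlam.le h1
  have m2 := mul_le_mul_of_nonneg_left h2 hlam.le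
  have m3 := mul_le_mul_of_nonneg_left h3 hlam.le
  linarith
end

section
/- Let H be a real Hilbert space, A : H → Set H monotone, D : H → H monotone and (1/η)-Lipschitz (η > 0), B : H → H monotone and (1/μ)-Lipschitz (μ > 0). Fix ε > 0, β > 0, λ > 0 and set V(x) := D x + ε x + β B x. Let x̄ ∈ H satisfy −V(x̄) ∈ A(x̄), let x ∈ H, and let p ∈ H satisfy p + λ a = x − λ V(x) for some a ∈ A(p). Then ‖x − x̄‖ ≤ (2 + 1/(λε) + 1/(ηε) + β/(με)) · ‖x − p‖. -/
open scoped RealInnerProductSpace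

/-- distance to the regularized solution is controlled by the
fixed-point residual: `‖x − x̄‖ ≤ (2 + 1/(λε) + 1/(ηε) + β/(με))‖x − p‖`. -/
theorem distance_controlled_by_residual
    {H : Type*} [NormedAddCommGroup H] [InnerProductSpace ℝ H]
    (A : H → Set H) (D B : H → H) (η μ : ℝ) (hη : 0 < η) (hμ : 0 < μ)
    (hAmono : ∀ ⦃x y u v : H⦄, u ∈ A x → v ∈ A y → (0:ℝ) ≤ ⟪u - v, x - y⟫)
    (hDmono : ∀ x y : H, (0:ℝ) ≤ ⟪D x - D y, x - y⟫)
    (hDlip : ∀ x y : H, ‖D x - D y‖ ≤ (1/η) * ‖x - y‖)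
    (hBmono : ∀ x y : H, (0:ℝ) ≤ ⟪B x - B y, x - y⟫)
    (hBlip : ∀ x y : H, ‖B x - B y‖ ≤ (1/μ) * ‖x - y‖)
    (ε β lam : ℝ) (hε : 0 < ε) (hβ : 0 < β) (hlam : 0 < lam)
    (xbar : H) (hxbar : -(D xbar + ε • xbar + β • B xbar) ∈ A xbar)
    (x p a : H) (ha : a ∈ A p)
    (hp : p + lam • a = x - lam • (D x + ε • x + β • B x)) :
    ‖x - xbar‖ ≤ (2 + 1/(lam * ε) + 1/(η * ε) + β/(μ * ε)) * ‖x - p‖ := by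
  have hav : a = (1/lam) • (x - p) - (D x + ε • x + β • B x) := by
    have h1 : lam • a = (x - p) - lam • (D x + ε • x + β • B x) := by
      rw [eq_sub_of_add_eq' hp]; abel
    have h2 : a = (1/lam) • (lam • a) := by
      rw [smul_smul, one_div, inv_mul_cancel₀ hlam.ne', one_smul]
    rw [h2, h1, smul_sub, smul_smul (1/lam) lam, one_div, inv_mul_cancel₀ hlam.ne', one_smul]
  obtain ⟨w, hw⟩ : ∃ w : H, w = (1/lam) • (x - p) - (D x - D p) - ε • (x - p) - β • (B x - B p) :=
    ⟨_, rfl⟩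
  have hdiff : a - -(D xbar + ε • xbar + β • B xbar)
      = w - (D p - D xbar) - ε • (p - xbar) - β • (B p - B xbar) := by
    rw [hav, hw]; module
  have hm := hAmono ha hxbar
  rw [hdiff, inner_sub_left, inner_sub_left, inner_sub_left, real_inner_smul_left,
    real_inner_smul_left, real_inner_self_eq_norm_sq] at hm
  have hD := hDmono p xbar
  have hB := mul_nonneg hβ.le (hBmono p xbar)
  have hcs := real_inner_le_norm w (p - xbar)
  have hwn : ‖w‖ ≤ (1/lam + 1/η + ε + β * (1/μ)) * ‖x - p‖ := by
    have e1 : ‖(1/lam) • (x - p)‖ = 1/lam * ‖x - p‖ := by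
      rw [norm_smul, Real.norm_of_nonneg (by positivity)]
    have e2 : ‖ε • (x - p)‖ = ε * ‖x - p‖ := by
      rw [norm_smul, Real.norm_of_nonneg hε.le]
    have e3 : ‖β • (B x - B p)‖ = β * ‖B x - B p‖ := by
      rw [norm_smul, Real.norm_of_nonneg hβ.le]
    have e4 := mul_le_mul_of_nonneg_left (hBlip x p) hβ.le
    have e5 := hDlip x p
    have t1 := norm_sub_le ((1/lam) • (x - p) - (D x - D p) - ε • (x - p)) (β • (B x - B p))
    have t2 := norm_sub_le ((1/lam) • (x - p) - (D x - D p)) (ε • (x - p))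
    have t3 := norm_sub_le ((1/lam) • (x - p)) (D x - D p)
    rw [hw]
    linarith
  have hq : ε * ‖p - xbar‖ ≤ ‖w‖ := by
    rcases (norm_nonneg (p - xbar)).eq_or_lt with h0 | h0
    · rw [← h0]; simp
    · refine le_of_mul_le_mul_right ?_ h0
      nlinarith
  have hfin : ‖p - xbar‖ ≤ (1 + 1/(lam * ε) + 1/(η * ε) + β/(μ * ε)) * ‖x - p‖ := by
    refine le_of_mul_le_mul_left ?_ hε
    refine (hq.trans hwn).trans (le_of_eq ?_)
    field_simp
    ring
  have htri : ‖x - xbar‖ ≤ ‖x - p‖ + ‖p - xbar‖ := norm_sub_le_norm_sub_add_norm_sub x p xbar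
  linarith
end
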